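/- For every N > 0 there exist constants K > 0 and C > 0 such that for all ν with 0 ≤ ν ≤ N, every integer k ≥ K, every j that is the k-th positive zero of J_ν, and every x* ≥ ν satisfying x*·g(ν/x*) = k − 1/4, one has | j − x* | ≤ C/(ν + k). -/

import Mathlib

open Real MeasureTheory Set

/-- The Bessel function of the first kind of order `ν ≥ 0`, for `x > 0`, via the
integral representation. -/
noncomputable def besselJ (ν x : ℝ) : ℝ :=
  (1 / π) * (∫ θ in (0:ℝ)..π, Real.cos (x * Real.sin θ - ν * θ)) -
    (Real.sin (ν * π) / π) * ∫ t in Set.Ioi (0:ℝ), Real.exp (-x * Real.sinh t - ν * t)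

/-- The function `g(t) = (√(1-t²) - t arccos t)/π`. -/
noncomputable def gfun (t : ℝ) : ℝ := (Real.sqrt (1 - t ^ 2) - t * Real.arccos t) / π

/-- `j` is the `k`-th positive zero of `J_ν`: `j > 0`, `J_ν(j) = 0`, and there are exactly
`k - 1` zeros of `J_ν` in `(0, j)`. -/
def IsKthZero (ν : ℝ) (k : ℕ) (j : ℝ) : Prop :=
  0 < j ∧ besselJ ν j = 0 ∧ {x : ℝ | 0 < x ∧ x < j ∧ besselJ ν x = 0}.ncard = k - 1

/-!
Both `j` and `x*` are compared with the McMahon point `c = π (k + ν/2 - 1/4)`. For `x*` this is the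
Taylor expansion `π g(t) = 1 - π t / 2 + O(t²)`. For `j`, the function `u = √x J_ν` satisfies
`u'' = -u + (ν² - 1/4) u / x²`; the energy `u² + u'²` bounds `u` uniformly for `ν ≤ N`, and
comparing `u` along `x + 2πn` with the stationary phase limit of `J_ν` at infinity gives
`u = √(2/π) cos (x - νπ/2 - π/4) + O(1/x)`. Hence every large zero is `O(1/j)`-close to some McMahon
point and every large McMahon point has a zero nearby. That the `k`-th zero goes with the `k`-th
point is exact for `ν = 1/2`, where `u` is a multiple of the sine. It passes from `ν` to `ν ± 1`
because the zeros of `J_ν` and `J_{ν+1}` interlace (Rolle), and to the orders in between by Sturm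
comparison.
-/

/-! ### Fresnel integrals -/

section Fresnel

open Complex Filter Topology

variable {b : ℂ}

lemma norm_cexp_neg_mul_sq_le_one (hb : 0 ≤ b.re) (s : ℝ) : ‖cexp (-b * (s : ℂ) ^ 2)‖ ≤ 1 := by
  have hre : (-b * (s : ℂ) ^ 2).re = -(b.re * s ^ 2) := by
    rw [← ofReal_pow, re_mul_ofReal, neg_re, neg_mul]
  rw [norm_exp, Real.exp_le_one_iff, hre, neg_nonpos]
  positivity

lemma continuous_cexp_neg_mul_sq (b : ℂ) : Continuous fun s : ℝ ↦ cexp (-b * (s : ℂ) ^ 2) := by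
  fun_prop

/-- The absolutely convergent remainder `∫₁^∞ e^{-b s²} / (2 s²) ds` left over when
`∫₁^∞ e^{-b s²} ds` is integrated by parts. -/
noncomputable def fresnelTail (b : ℂ) : ℂ :=
  ∫ s in Ioi (1 : ℝ), cexp (-b * (s : ℂ) ^ 2) / (2 * (s : ℂ) ^ 2)

/-- The improper integral `∫₀^∞ e^{-b s²} ds` for `0 ≤ re b`, `b ≠ 0`, with the part on `[1, ∞)`
integrated by parts so that it also makes sense on the imaginary axis, where the Bochner integral
over `(0, ∞)` does not exist. -/
noncomputable def fresnelIntegral (b : ℂ) : ℂ :=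
  (∫ s in (0 : ℝ)..1, cexp (-b * (s : ℂ) ^ 2)) + (cexp (-b) / (2 * b) - fresnelTail b / b)

lemma integrableOn_inv_two_mul_sq : IntegrableOn (fun s : ℝ ↦ 1 / (2 * s ^ 2)) (Ioi 1) := by
  have hrpow : IntegrableOn (fun s : ℝ ↦ (1 / 2 : ℝ) * s ^ (-2 : ℝ)) (Ioi 1) :=
    (integrableOn_Ioi_rpow_of_lt (by norm_num) one_pos).const_mul _
  refine hrpow.congr_fun (fun s (hs : 1 < s) ↦ ?_) measurableSet_Ioi
  beta_reduce
  rw [Real.rpow_neg (by linarith), Real.rpow_two, one_div, one_div, mul_inv]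

lemma norm_fresnelTail_integrand_le (hb : 0 ≤ b.re) (s : ℝ) :
    ‖cexp (-b * (s : ℂ) ^ 2) / (2 * (s : ℂ) ^ 2)‖ ≤ 1 / (2 * s ^ 2) := by
  have hden : ‖2 * (s : ℂ) ^ 2‖ = 2 * s ^ 2 := by simp
  rw [norm_div, hden]
  gcongr
  exact norm_cexp_neg_mul_sq_le_one hb s

lemma aestronglyMeasurable_fresnelTail_integrand (b : ℂ) :
    AEStronglyMeasurable (fun s : ℝ ↦ cexp (-b * (s : ℂ) ^ 2) / (2 * (s : ℂ) ^ 2))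
      (volume.restrict (Ioi 1)) :=
  Measurable.aestronglyMeasurable (by fun_prop)

lemma integrableOn_fresnelTail_integrand (hb : 0 ≤ b.re) :
    IntegrableOn (fun s : ℝ ↦ cexp (-b * (s : ℂ) ^ 2) / (2 * (s : ℂ) ^ 2)) (Ioi 1) :=
  integrableOn_inv_two_mul_sq.mono' (aestronglyMeasurable_fresnelTail_integrand b)
    (.of_forall (norm_fresnelTail_integrand_le hb))

lemma hasDerivAt_neg_cexp_neg_mul_sq_div (hb : b ≠ 0) {s : ℝ} (hs : s ≠ 0) :
    HasDerivAt (fun s : ℝ ↦ -cexp (-b * (s : ℂ) ^ 2) / (2 * b * s))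
      (cexp (-b * (s : ℂ) ^ 2) + cexp (-b * (s : ℂ) ^ 2) / (2 * (s : ℂ) ^ 2) / b) s := by
  have hs' : (s : ℂ) ≠ 0 := ofReal_ne_zero.2 hs
  have hnum : HasDerivAt (fun z : ℂ ↦ -b * z ^ 2) (-b * (2 * (s : ℂ))) (s : ℂ) := by
    simpa using (hasDerivAt_pow 2 (s : ℂ)).const_mul (-b)
  have hden : HasDerivAt (fun z : ℂ ↦ 2 * b * z) (2 * b) (s : ℂ) := by
    simpa using (hasDerivAt_id (s : ℂ)).const_mul (2 * b)
  refine HasDerivAt.comp_ofReal ((hnum.cexp.neg.div hden (by simp [hb, hs])).congr_deriv ?_)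
  simp only [Pi.neg_apply]
  field_simp
  ring

lemma integral_cexp_neg_mul_sq_by_parts (hb : b ≠ 0) {T : ℝ} (hT : 1 ≤ T) :
    ∫ s in (1 : ℝ)..T, cexp (-b * (s : ℂ) ^ 2) =
      cexp (-b) / (2 * b) - cexp (-b * (T : ℂ) ^ 2) / (2 * b * T) -
        (∫ s in (1 : ℝ)..T, cexp (-b * (s : ℂ) ^ 2) / (2 * (s : ℂ) ^ 2)) / b := by
  have hne : ∀ s ∈ uIcc 1 T, s ≠ 0 := fun s hs ↦ by
    rw [uIcc_of_le hT] at hs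
    exact (one_pos.trans_le hs.1).ne'
  have hmain := (continuous_cexp_neg_mul_sq b).intervalIntegrable (μ := volume) 1 T
  have hrest : IntervalIntegrable
      (fun s : ℝ ↦ cexp (-b * (s : ℂ) ^ 2) / (2 * (s : ℂ) ^ 2) / b) volume 1 T := by
    refine ContinuousOn.intervalIntegrable (.div_const (.div (by fun_prop) (by fun_prop) ?_) b)
    exact fun s hs ↦ by simp [hne s hs]
  have hftc := intervalIntegral.integral_eq_sub_of_hasDerivAt
    (fun s hs ↦ hasDerivAt_neg_cexp_neg_mul_sq_div hb (hne s hs)) (hmain.add hrest)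
  rw [intervalIntegral.integral_add hmain hrest, intervalIntegral.integral_div] at hftc
  rw [eq_sub_iff_add_eq, hftc]
  simp only [ofReal_one, one_pow, mul_one]
  ring

lemma tendsto_cexp_neg_mul_sq_div_atTop (hb : 0 ≤ b.re) :
    Tendsto (fun T : ℝ ↦ cexp (-b * (T : ℂ) ^ 2) / (2 * b * T)) atTop (𝓝 0) := by
  have hinv : Tendsto (fun T : ℝ ↦ ‖2 * b‖⁻¹ * T⁻¹) atTop (𝓝 0) := by
    simpa using tendsto_inv_atTop_zero.const_mul ‖2 * b‖⁻¹
  refine squeeze_zero_norm' ?_ hinv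
  filter_upwards [eventually_gt_atTop 0] with T hT
  rw [norm_div, norm_mul (2 * b), norm_real, Real.norm_of_nonneg hT.le, ← mul_inv, ← one_div]
  gcongr
  exact norm_cexp_neg_mul_sq_le_one hb T

lemma tendsto_integral_cexp_neg_mul_sq (hb : 0 ≤ b.re) (hb0 : b ≠ 0) :
    Tendsto (fun T : ℝ ↦ ∫ s in (0 : ℝ)..T, cexp (-b * (s : ℂ) ^ 2)) atTop
      (𝓝 (fresnelIntegral b)) := by
  have htail := (intervalIntegral_tendsto_integral_Ioi 1
    (integrableOn_fresnelTail_integrand hb) tendsto_id).div_const b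
  have hlim := ((tendsto_cexp_neg_mul_sq_div_atTop hb).const_sub (cexp (-b) / (2 * b))).sub htail
  rw [sub_zero] at hlim
  refine (hlim.const_add (∫ s in (0 : ℝ)..1, cexp (-b * (s : ℂ) ^ 2))).congr' ?_
  filter_upwards [eventually_ge_atTop 1] with T hT
  simp only [id]
  rw [← integral_cexp_neg_mul_sq_by_parts hb0 hT]
  exact intervalIntegral.integral_add_adjacent_intervals
    ((continuous_cexp_neg_mul_sq b).intervalIntegrable _ _)
    ((continuous_cexp_neg_mul_sq b).intervalIntegrable _ _)

lemma continuousWithinAt_fresnelTail (b : ℂ) :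
    ContinuousWithinAt fresnelTail {c | 0 ≤ c.re} b := by
  refine continuousWithinAt_of_dominated (bound := fun s ↦ 1 / (2 * s ^ 2))
    (.of_forall aestronglyMeasurable_fresnelTail_integrand) ?_ integrableOn_inv_two_mul_sq
    (.of_forall fun s ↦ Continuous.continuousWithinAt (by fun_prop))
  filter_upwards [self_mem_nhdsWithin] with c hc
  exact .of_forall (norm_fresnelTail_integrand_le hc)

lemma continuousWithinAt_fresnelIntegral (hb : b ≠ 0) :
    ContinuousWithinAt fresnelIntegral {c | 0 ≤ c.re} b := by
  refine .add (Continuous.continuousWithinAt ?_) (.sub (ContinuousAt.continuousWithinAt ?_)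
    ((continuousWithinAt_fresnelTail b).div continuousWithinAt_id hb))
  · exact intervalIntegral.continuous_parametric_intervalIntegral_of_continuous'
      (by fun_prop) _ _
  · exact .div (by fun_prop) (by fun_prop) (by simpa using hb)

lemma fresnelIntegral_eq_of_re_pos (hb : 0 < b.re) :
    fresnelIntegral b = (π / b) ^ (1 / 2 : ℂ) / 2 := by
  have hb0 : b ≠ 0 := by rintro rfl; simp at hb
  rw [← integral_gaussian_complex_Ioi hb]
  exact tendsto_nhds_unique (tendsto_integral_cexp_neg_mul_sq hb.le hb0)
    (intervalIntegral_tendsto_integral_Ioi 0 (integrable_cexp_neg_mul_sq hb).integrableOn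
      tendsto_id)

lemma pi_div_mem_slitPlane (hb : 0 ≤ b.re) (hb0 : b ≠ 0) : (π / b : ℂ) ∈ slitPlane := by
  have hbI : 0 < b.re ∨ b.im ≠ 0 := by
    rcases hb.lt_or_eq with h | h
    · exact .inl h
    · exact .inr fun him ↦ hb0 (Complex.ext h.symm him)
  have hn : 0 < normSq b := normSq_pos.2 hb0
  rw [mem_slitPlane_iff, div_re, div_im]
  refine hbI.imp (fun h ↦ ?_) (fun h ↦ ?_)
  · simp only [ofReal_re, ofReal_im, zero_mul, zero_div, add_zero]
    positivity
  · simp only [ofReal_re, ofReal_im, zero_mul, zero_div, zero_sub]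
    exact neg_ne_zero.2 (div_ne_zero (mul_ne_zero Real.pi_ne_zero h) (ne_of_gt hn))

-- Both sides are continuous up to the imaginary axis and agree to the right of it.
lemma fresnelIntegral_eq (hb : 0 ≤ b.re) (hb0 : b ≠ 0) :
    fresnelIntegral b = (π / b) ^ (1 / 2 : ℂ) / 2 := by
  have hleft : Tendsto fresnelIntegral (𝓝[{c | 0 < c.re}] b) (𝓝 (fresnelIntegral b)) :=
    (continuousWithinAt_fresnelIntegral hb0).mono fun c (hc : 0 < c.re) ↦ hc.le
  have hright : ContinuousAt (fun c : ℂ ↦ (π / c) ^ (1 / 2 : ℂ) / 2) b :=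
    ((continuousAt_const.div continuousAt_id hb0).cpow continuousAt_const
      (pi_div_mem_slitPlane hb hb0)).div_const 2
  have hne : (𝓝[{c : ℂ | 0 < c.re}] b).NeBot := by
    rw [← mem_closure_iff_nhdsWithin_neBot, Complex.closure_setOfPred_lt_re]
    exact hb
  refine tendsto_nhds_unique hleft (hright.continuousWithinAt.tendsto.congr' ?_)
  filter_upwards [self_mem_nhdsWithin] with c hc
  exact (fresnelIntegral_eq_of_re_pos hc).symm

lemma fresnelIntegral_I : fresnelIntegral I = (√π / 2 : ℝ) * cexp (-(π / 4 : ℝ) * I) := by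
  have hpolar : (π / I : ℂ) = (π : ℝ) * cexp ((-(π / 2) : ℝ) * I) := by
    rw [ofReal_neg, ofReal_div, ofReal_ofNat, ← neg_div, exp_neg_pi_div_two_mul_I, div_I, mul_neg]
  have hpi := Real.pi_pos
  have hlog : log (π / I : ℂ) = (Real.log π : ℝ) + (-(π / 2) : ℝ) * I := by
    rw [hpolar, log_ofReal_mul hpi (exp_ne_zero _), Complex.log_exp] <;>
      simp only [im_ofReal_mul, I_im, mul_one] <;> linarith
  have hsqrt : cexp ((Real.log π : ℝ) * (1 / 2 : ℂ)) = ((√π : ℝ) : ℂ) := by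
    rw [Real.sqrt_eq_rpow, Real.rpow_def_of_pos hpi]
    push_cast
    ring_nf
  rw [fresnelIntegral_eq (by simp) I_ne_zero,
    cpow_def_of_ne_zero (div_ne_zero (ofReal_ne_zero.2 hpi.ne') I_ne_zero), hlog, add_mul,
    Complex.exp_add, hsqrt, show ((-(π / 2) : ℝ) * I : ℂ) * (1 / 2) = -(π / 4 : ℝ) * I by
      push_cast; ring]
  push_cast
  ring

lemma tendsto_symmetric_fresnel :
    Tendsto (fun T : ℝ ↦ ∫ s in (-T)..T, cexp (-I * (s : ℂ) ^ 2)) atTop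
      (𝓝 ((√π : ℝ) * cexp (-(π / 4 : ℝ) * I))) := by
  have hhalf := (tendsto_integral_cexp_neg_mul_sq (b := I) (by simp) I_ne_zero).const_mul 2
  rw [fresnelIntegral_I, ← mul_assoc, ofReal_div, ofReal_ofNat,
    mul_div_cancel₀ _ (two_ne_zero : (2 : ℂ) ≠ 0)] at hhalf
  refine hhalf.congr fun T ↦ ?_
  have heven : ∫ s in (-T)..0, cexp (-I * (s : ℂ) ^ 2) =
      ∫ s in (0 : ℝ)..T, cexp (-I * (s : ℂ) ^ 2) := by
    have hflip := intervalIntegral.integral_comp_neg (a := 0) (b := T)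
      (fun s : ℝ ↦ cexp (-I * (s : ℂ) ^ 2))
    simpa only [neg_zero, ofReal_neg, neg_sq] using hflip.symm
  have hint := fun c d ↦ (continuous_cexp_neg_mul_sq I).intervalIntegrable (μ := volume) c d
  rw [← intervalIntegral.integral_add_adjacent_intervals (hint (-T) 0) (hint 0 T), heven, two_mul]

end Fresnel

/-! ### Stationary phase for the phase `cos` -/

section StationaryPhase

open Complex Filter Topology

-- The integrand is `q` times the derivative of `e^{ixf} / (ix)`.
lemma norm_integral_cexp_phase_mul_deriv_le {f f' : ℝ → ℝ} {q q' : ℝ → ℂ} {a b x : ℝ}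
    (hab : a ≤ b) (hx : 0 < x) (hf : ∀ φ ∈ uIcc a b, HasDerivAt f (f' φ) φ)
    (hf' : ContinuousOn f' (uIcc a b)) (hq : ∀ φ ∈ uIcc a b, HasDerivAt q (q' φ) φ)
    (hq' : ContinuousOn q' (uIcc a b)) :
    ‖∫ φ in a..b, cexp ((x * f φ : ℝ) * I) * (q φ * f' φ)‖ ≤
      (‖q a‖ + ‖q b‖ + ∫ φ in a..b, ‖q' φ‖) / x := by
  set E : ℝ → ℂ := fun φ ↦ cexp ((x * f φ : ℝ) * I) / (x * I)
  have hx0 : (x : ℂ) ≠ 0 := ofReal_ne_zero.2 hx.ne'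
  have hE : ∀ φ ∈ uIcc a b, HasDerivAt E (f' φ * cexp ((x * f φ : ℝ) * I)) φ := fun φ hφ ↦ by
    refine (((hf φ hφ).const_mul x).ofReal_comp.mul_const I).cexp.div_const _ |>.congr_deriv ?_
    push_cast
    field_simp
  have hnormE : ∀ φ, ‖E φ‖ = 1 / x := fun φ ↦ by
    rw [norm_div, norm_exp_ofReal_mul_I, norm_mul, norm_I, norm_real, Real.norm_of_nonneg hx.le,
      mul_one]
  have hE' : ContinuousOn (fun φ ↦ (f' φ : ℂ) * cexp ((x * f φ : ℝ) * I)) (uIcc a b) := by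
    have hfc : ContinuousOn f (uIcc a b) := fun φ hφ ↦ (hf φ hφ).continuousAt.continuousWithinAt
    fun_prop
  have hparts := intervalIntegral.integral_mul_deriv_eq_deriv_mul hq hE hq'.intervalIntegrable
    hE'.intervalIntegrable
  have hrest : ‖∫ φ in a..b, q' φ * E φ‖ ≤ (∫ φ in a..b, ‖q' φ‖) / x := by
    refine (intervalIntegral.norm_integral_le_integral_norm hab).trans_eq ?_
    simp only [norm_mul, hnormE, mul_one_div, intervalIntegral.integral_div]
  calc ‖∫ φ in a..b, cexp ((x * f φ : ℝ) * I) * (q φ * f' φ)‖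
      = ‖q b * E b - q a * E a - ∫ φ in a..b, q' φ * E φ‖ := by
        rw [← hparts]; congr 2 with φ; ring
    _ ≤ ‖q b * E b‖ + ‖q a * E a‖ + (∫ φ in a..b, ‖q' φ‖) / x :=
        (norm_sub_le _ _).trans (add_le_add (norm_sub_le _ _) hrest)
    _ = (‖q a‖ + ‖q b‖ + ∫ φ in a..b, ‖q' φ‖) / x := by
        rw [norm_mul, norm_mul, hnormE, hnormE]; ring

lemma dslope_sin_zero_ne_zero {φ : ℝ} (hφ : |φ| < π) : dslope Complex.sin 0 (φ : ℂ) ≠ 0 := by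
  rcases eq_or_ne φ 0 with rfl | h0
  · simp
  · have hsin : Real.sin φ ≠ 0 := fun h ↦
      h0 ((Real.sin_eq_zero_iff_of_lt_of_lt (abs_lt.1 hφ).1 (abs_lt.1 hφ).2).1 h)
    rw [dslope_of_ne _ (ofReal_ne_zero.2 h0), slope_def_field, Complex.sin_zero, sub_zero, sub_zero,
      ← ofReal_sin]
    exact div_ne_zero (ofReal_ne_zero.2 hsin) (ofReal_ne_zero.2 h0)

lemma analyticAt_dslope_of_differentiable {a : ℂ → ℂ} (ha : Differentiable ℂ a) (c z : ℂ) :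
    AnalyticAt ℂ (dslope a c) z :=
  Differentiable.analyticAt (differentiableOn_univ.1
    ((differentiableOn_dslope univ_mem).2 ha.differentiableOn)) z

lemma exists_analyticAt_eq_mul_sin {a : ℂ → ℂ} (ha : Differentiable ℂ a) (ha0 : a 0 = 0) :
    ∃ Q : ℂ → ℂ, ∀ φ : ℝ, |φ| < π → AnalyticAt ℂ Q φ ∧ a φ = Q φ * (Real.sin φ : ℝ) := by
  refine ⟨dslope a 0 / dslope Complex.sin 0, fun φ hφ ↦ ⟨?_, ?_⟩⟩
  · exact (analyticAt_dslope_of_differentiable ha _ _).div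
      (analyticAt_dslope_of_differentiable differentiable_sin _ _) (dslope_sin_zero_ne_zero hφ)
  · have hadiv : (φ : ℂ) * dslope a 0 φ = a φ := by
      simpa [ha0] using sub_smul_dslope a 0 (φ : ℂ)
    have hsindiv : (φ : ℂ) * dslope Complex.sin 0 φ = Complex.sin φ := by
      simpa using sub_smul_dslope Complex.sin 0 (φ : ℂ)
    have hne := dslope_sin_zero_ne_zero hφ
    rw [ofReal_sin, ← hadiv, ← hsindiv, Pi.div_apply]
    field_simp

lemma exists_norm_integral_cexp_cos_mul_le {a : ℂ → ℂ} (ha : Differentiable ℂ a) (ha0 : a 0 = 0) :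
    ∃ C : ℝ, ∀ x : ℝ, 0 < x →
      ‖∫ φ in (-(π / 2))..(π / 2), cexp ((x * Real.cos φ : ℝ) * I) * a φ‖ ≤ C / x := by
  obtain ⟨Q, hQ⟩ := exists_analyticAt_eq_mul_sin ha ha0
  have hpi := Real.pi_pos
  have hmem : ∀ φ ∈ uIcc (-(π / 2)) (π / 2), |φ| < π := fun φ hφ ↦ by
    rw [uIcc_of_le (by linarith)] at hφ
    exact (abs_le.2 hφ).trans_lt (by linarith)
  refine ⟨‖-Q (-(π / 2) : ℝ)‖ + ‖-Q (π / 2 : ℝ)‖ + ∫ φ in (-(π / 2))..(π / 2), ‖-deriv Q φ‖,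
    fun x hx ↦ ?_⟩
  convert norm_integral_cexp_phase_mul_deriv_le (f := Real.cos) (f' := fun φ ↦ -Real.sin φ)
    (q := fun φ ↦ -Q φ) (q' := fun φ ↦ -deriv Q φ) (by linarith : -(π / 2) ≤ π / 2) hx
    (fun φ _ ↦ Real.hasDerivAt_cos φ) (by fun_prop)
    (fun φ hφ ↦ (hQ φ (hmem φ hφ)).1.differentiableAt.hasDerivAt.comp_ofReal.neg)
    (fun φ hφ ↦ (((hQ φ (hmem φ hφ)).1.deriv.continuousAt.comp
      continuous_ofReal.continuousAt).neg).continuousWithinAt) using 2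
  refine intervalIntegral.integral_congr fun φ hφ ↦ ?_
  simp only [(hQ φ (hmem φ hφ)).2, ofReal_neg, neg_mul_neg]

lemma cos_eq_one_sub_two_mul_sin_half_sq (φ : ℝ) :
    Real.cos φ = 1 - 2 * Real.sin (φ / 2) ^ 2 := by
  rw [← mul_div_cancel₀ φ (two_ne_zero' ℝ), Real.cos_two_mul, Real.cos_sq',
    mul_div_cancel₀ φ (two_ne_zero' ℝ)]
  ring

-- Substitute `s = √(2x) sin (φ / 2)`.
lemma integral_cexp_cos_mul_cos_half {x : ℝ} (hx : 0 < x) :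
    ∫ φ in (-(π / 2))..(π / 2), cexp ((x * Real.cos φ : ℝ) * I) * Complex.cos (φ / 2) =
      (√(2 / x) : ℝ) * cexp (x * I) * ∫ s in (-√x)..(√x), cexp (-I * (s : ℂ) ^ 2) := by
  have hsubst : ∀ φ ∈ uIcc (-(π / 2)) (π / 2), HasDerivAt (fun φ : ℝ ↦ √(2 * x) * Real.sin (φ / 2))
      (√(2 * x) * (Real.cos (φ / 2) * (1 / 2))) φ :=
    fun φ _ ↦ ((hasDerivAt_id φ).div_const 2).sin.const_mul _
  have hright : √(2 * x) * Real.sin (π / 2 / 2) = √x := by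
    rw [show π / 2 / 2 = π / 4 by ring, Real.sin_pi_div_four, Real.sqrt_mul zero_le_two]
    linear_combination (√x / 2) * Real.mul_self_sqrt (zero_le_two (α := ℝ))
  have hleft : √(2 * x) * Real.sin (-(π / 2) / 2) = -√x := by
    rw [neg_div, Real.sin_neg, mul_neg, hright]
  have hchange := intervalIntegral.integral_deriv_smul_comp hsubst (by fun_prop)
    (continuous_cexp_neg_mul_sq I)
  rw [hright, hleft] at hchange
  rw [← hchange, ← intervalIntegral.integral_const_mul]
  refine intervalIntegral.integral_congr fun φ _ ↦ ?_
  have hjac : Complex.cos (φ / 2) =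
      (√(2 / x) : ℝ) * ((√(2 * x) * (Real.cos (φ / 2) * (1 / 2)) : ℝ) : ℂ) := by
    rw [← ofReal_mul, ← mul_assoc, ← Real.sqrt_mul (by positivity),
      show 2 / x * (2 * x) = 2 ^ 2 by field_simp, Real.sqrt_sq zero_le_two]
    push_cast
    ring
  have hphase : cexp ((x * Real.cos φ : ℝ) * I) = cexp (x * I) *
      cexp (-I * ((√(2 * x) * Real.sin (φ / 2) : ℝ) : ℂ) ^ 2) := by
    rw [← Complex.exp_add, ← ofReal_pow, mul_pow, Real.sq_sqrt (by positivity),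
      cos_eq_one_sub_two_mul_sin_half_sq]
    push_cast
    ring_nf
  simp only [Function.comp]
  rw [hphase, hjac, real_smul]
  ring

lemma tendsto_sqrt_mul_integral_cexp_cos_mul_cos_half :
    Tendsto (fun x : ℝ ↦ (√x : ℝ) *
      (∫ φ in (-(π / 2))..(π / 2), cexp ((x * Real.cos φ : ℝ) * I) * Complex.cos (φ / 2)) -
      (√(2 * π) : ℝ) * cexp ((x - π / 4 : ℝ) * I)) atTop (𝓝 0) := by
  have hfresnel := ((tendsto_symmetric_fresnel.comp Real.tendsto_sqrt_atTop).sub_const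
    ((√π : ℝ) * cexp (-(π / 4 : ℝ) * I))).norm.const_mul √2
  rw [sub_self, norm_zero, mul_zero] at hfresnel
  refine squeeze_zero_norm' ?_ hfresnel
  filter_upwards [eventually_gt_atTop 0] with x hx
  have hsqrt : √x * √(2 / x) = √2 := by
    rw [← Real.sqrt_mul hx.le, mul_div_cancel₀ _ hx.ne']
  have hexp : cexp ((x - π / 4 : ℝ) * I) = cexp (x * I) * cexp (-(π / 4 : ℝ) * I) := by
    rw [← Complex.exp_add]; push_cast; ring_nf
  refine le_of_eq ?_
  rw [integral_cexp_cos_mul_cos_half hx, hexp, Real.sqrt_mul zero_le_two, ← hsqrt]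
  set F := ∫ s in (-√x)..(√x), cexp (-I * (s : ℂ) ^ 2)
  set L := cexp (-(π / 4 : ℝ) * I)
  calc _ = ‖((√x * √(2 / x) : ℝ) : ℂ) * cexp (x * I) * (F - (√π : ℝ) * L)‖ := by
        congr 1; push_cast; ring
    _ = _ := by
        rw [norm_mul, norm_mul, norm_exp_ofReal_mul_I, mul_one, norm_real,
          Real.norm_of_nonneg (by positivity)]
        rfl

-- `a - a(0) cos (φ / 2)` vanishes at the stationary point, so it only contributes `O(1/x)`.
lemma tendsto_sqrt_mul_integral_cexp_cos_mul {a : ℂ → ℂ} (ha : Differentiable ℂ a) :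
    Tendsto (fun x : ℝ ↦ (√x : ℝ) *
      (∫ φ in (-(π / 2))..(π / 2), cexp ((x * Real.cos φ : ℝ) * I) * a φ) -
      (√(2 * π) : ℝ) * cexp ((x - π / 4 : ℝ) * I) * a 0) atTop (𝓝 0) := by
  obtain ⟨C, hC⟩ := exists_norm_integral_cexp_cos_mul_le
    (a := fun z ↦ a z - Complex.cos (z / 2) * a 0) (by fun_prop) (by simp)
  have hnonstat : Tendsto (fun x : ℝ ↦ (√x : ℝ) * ∫ φ in (-(π / 2))..(π / 2),
      cexp ((x * Real.cos φ : ℝ) * I) * (a φ - Complex.cos (φ / 2) * a 0)) atTop (𝓝 0) := by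
    have hdecay : Tendsto (fun x : ℝ ↦ C * (√x)⁻¹) atTop (𝓝 0) := by
      simpa using (tendsto_inv_atTop_zero.comp Real.tendsto_sqrt_atTop).const_mul C
    refine squeeze_zero_norm' ?_ hdecay
    filter_upwards [eventually_gt_atTop 0] with x hx
    rw [norm_mul, norm_real, Real.norm_of_nonneg (Real.sqrt_nonneg _)]
    calc _ ≤ √x * (C / x) := by gcongr; exact hC x hx
      _ = C * (√x)⁻¹ := by
        rw [mul_div_left_comm, Real.sqrt_div_self', one_div]
  have hlim := hnonstat.add (tendsto_sqrt_mul_integral_cexp_cos_mul_cos_half.mul_const (a 0))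
  rw [zero_mul, add_zero] at hlim
  refine hlim.congr fun x ↦ ?_
  have hac : Continuous a := ha.continuous
  have hsplit : ∫ φ in (-(π / 2))..(π / 2), cexp ((x * Real.cos φ : ℝ) * I) * a φ =
      (∫ φ in (-(π / 2))..(π / 2),
        cexp ((x * Real.cos φ : ℝ) * I) * (a φ - Complex.cos (φ / 2) * a 0)) +
      (∫ φ in (-(π / 2))..(π / 2), cexp ((x * Real.cos φ : ℝ) * I) * Complex.cos (φ / 2)) *
        a 0 := by
    rw [← intervalIntegral.integral_mul_const, ← intervalIntegral.integral_add
      (Continuous.intervalIntegrable (by fun_prop) _ _)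
      (Continuous.intervalIntegrable (by fun_prop) _ _)]
    congr 1 with φ
    ring
  rw [hsplit]
  ring

end StationaryPhase

/-! ### The two integrals in the definition of `besselJ` -/

section BesselIntegrals

open Filter Topology

/-- The oscillatory integral in the definition of `besselJ`; it is `π` times the Anger function. -/
noncomputable def angerIntegral (ν x : ℝ) : ℝ := ∫ θ in (0 : ℝ)..π, cos (x * sin θ - ν * θ)

/-- The exponentially decaying integral in Schläfli's representation of the Bessel function. -/
noncomputable def schlafliIntegral (ν x : ℝ) : ℝ := ∫ t in Ioi (0 : ℝ), exp (-x * sinh t - ν * t)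

lemma besselJ_eq (ν x : ℝ) :
    besselJ ν x = (angerIntegral ν x - sin (ν * π) * schlafliIntegral ν x) / π := by
  unfold besselJ angerIntegral schlafliIntegral
  ring

lemma cos_mul_cos_sub (s ν θ : ℝ) :
    cos θ * cos (s - ν * θ) = (cos (s - (ν - 1) * θ) + cos (s - (ν + 1) * θ)) / 2 := by
  rw [show s - (ν - 1) * θ = s - ν * θ + θ by ring, show s - (ν + 1) * θ = s - ν * θ - θ by ring,
    cos_add, cos_sub (s - ν * θ)]
  ring

lemma sin_mul_sin_sub (s ν θ : ℝ) :
    sin θ * sin (s - ν * θ) = -(cos (s - (ν - 1) * θ) - cos (s - (ν + 1) * θ)) / 2 := by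
  rw [show s - (ν - 1) * θ = s - ν * θ + θ by ring, show s - (ν + 1) * θ = s - ν * θ - θ by ring,
    cos_add, cos_sub (s - ν * θ)]
  ring

lemma cosh_mul_exp_sub (s ν t : ℝ) :
    cosh t * exp (s - ν * t) = (exp (s - (ν - 1) * t) + exp (s - (ν + 1) * t)) / 2 := by
  rw [show s - (ν - 1) * t = s - ν * t + t by ring, show s - (ν + 1) * t = s - ν * t + -t by ring,
    exp_add, exp_add _ (-t), cosh_eq]
  ring

lemma sinh_mul_exp_sub (s ν t : ℝ) :
    sinh t * exp (s - ν * t) = (exp (s - (ν - 1) * t) - exp (s - (ν + 1) * t)) / 2 := by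
  rw [show s - (ν - 1) * t = s - ν * t + t by ring, show s - (ν + 1) * t = s - ν * t + -t by ring,
    exp_add, exp_add _ (-t), sinh_eq]
  ring

lemma intervalIntegrable_cos_sin_sub (ν x : ℝ) :
    IntervalIntegrable (fun θ ↦ cos (x * sin θ - ν * θ)) volume 0 π :=
  Continuous.intervalIntegrable (by fun_prop) _ _

lemma hasDerivAt_angerIntegral (ν x : ℝ) :
    HasDerivAt (angerIntegral ν) ((angerIntegral (ν - 1) x - angerIntegral (ν + 1) x) / 2) x := by
  have hderiv := (intervalIntegral.hasDerivAt_integral_of_dominated_loc_of_deriv_le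
    (F := fun x θ ↦ cos (x * sin θ - ν * θ)) (μ := volume) (a := 0) (b := π) (x₀ := x)
    (F' := fun x θ ↦ -(sin θ * sin (x * sin θ - ν * θ))) (bound := fun _ ↦ 1) univ_mem
    (.of_forall fun y ↦ Continuous.aestronglyMeasurable (by fun_prop))
    (intervalIntegrable_cos_sin_sub ν x) (Continuous.aestronglyMeasurable (by fun_prop))
    (.of_forall fun θ _ y _ ↦ ?_) (Continuous.intervalIntegrable (by fun_prop) _ _)
    (.of_forall fun θ _ y _ ↦ ?_)).2
  · refine hderiv.congr_deriv ?_
    unfold angerIntegral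
    rw [← intervalIntegral.integral_sub (intervalIntegrable_cos_sin_sub _ x)
      (intervalIntegrable_cos_sin_sub _ x), ← intervalIntegral.integral_div]
    congr 1 with θ
    rw [sin_mul_sin_sub]
    ring
  · rw [norm_neg, norm_mul]
    exact mul_le_one₀ (abs_sin_le_one _) (norm_nonneg _) (abs_sin_le_one _)
  · have hphase : HasDerivAt (fun y ↦ y * sin θ - ν * θ) (1 * sin θ) y :=
      ((hasDerivAt_id y).mul_const _).sub_const _
    exact hphase.cos.congr_deriv (by ring)

lemma angerIntegral_recurrence (ν x : ℝ) :
    x * (angerIntegral (ν - 1) x + angerIntegral (ν + 1) x) =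
      2 * (ν * angerIntegral ν x - sin (ν * π)) := by
  have hderiv : ∀ θ ∈ uIcc 0 π, HasDerivAt (fun θ ↦ sin (x * sin θ - ν * θ))
      (x / 2 * (cos (x * sin θ - (ν - 1) * θ) + cos (x * sin θ - (ν + 1) * θ)) -
        ν * cos (x * sin θ - ν * θ)) θ := fun θ _ ↦ by
    have hphase : HasDerivAt (fun θ ↦ x * sin θ - ν * θ) (x * cos θ - ν * 1) θ :=
      ((hasDerivAt_sin θ).const_mul x).sub ((hasDerivAt_id θ).const_mul ν)
    refine hphase.sin.congr_deriv ?_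
    linear_combination x * cos_mul_cos_sub (x * sin θ) ν θ
  have hsum := (intervalIntegrable_cos_sin_sub (ν - 1) x).add
    (intervalIntegrable_cos_sin_sub (ν + 1) x)
  have hmain := (intervalIntegrable_cos_sin_sub ν x).const_mul ν
  have hftc := intervalIntegral.integral_eq_sub_of_hasDerivAt hderiv
    ((hsum.const_mul (x / 2)).sub hmain)
  rw [intervalIntegral.integral_sub (hsum.const_mul (x / 2)) hmain,
    intervalIntegral.integral_const_mul, intervalIntegral.integral_const_mul,
    intervalIntegral.integral_add (intervalIntegrable_cos_sin_sub _ x)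
      (intervalIntegrable_cos_sin_sub _ x)] at hftc
  simp only [sin_pi, sin_zero, mul_zero, sub_zero, zero_sub, sin_neg] at hftc
  unfold angerIntegral
  linear_combination 2 * hftc

lemma sq_div_four_le_sinh {t : ℝ} (ht : 0 ≤ t) : t ^ 2 / 4 ≤ sinh t := by
  have hexp := quadratic_le_exp_of_nonneg ht
  have hexp_neg : exp (-t) ≤ 1 := exp_le_one_iff.2 (neg_nonpos.2 ht)
  rw [sinh_eq]
  linarith

lemma integrableOn_exp_neg_mul_sinh_sub (ν : ℝ) {x : ℝ} (hx : 0 < x) :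
    IntegrableOn (fun t ↦ exp (-x * sinh t - ν * t)) (Ioi 0) := by
  have hgauss := ((integrable_exp_neg_mul_sq (by positivity : 0 < x / 8)).const_mul
    (exp (2 * ν ^ 2 / x))).integrableOn (s := Ioi 0)
  refine hgauss.mono' (Continuous.aestronglyMeasurable (by fun_prop))
    ((ae_restrict_iff' measurableSet_Ioi).2 (.of_forall fun t (ht : 0 < t) ↦ ?_))
  rw [norm_of_nonneg (exp_pos _).le, ← exp_add, exp_le_exp]
  have hsinh := mul_le_mul_of_nonneg_left (sq_div_four_le_sinh ht.le) hx.le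
  have hsquare : 2 * ν ^ 2 / x + x / 8 * t ^ 2 + ν * t = x / 8 * (t + 4 * ν / x) ^ 2 := by
    field_simp
    ring
  have hnonneg : 0 ≤ x / 8 * (t + 4 * ν / x) ^ 2 := by positivity
  linarith

lemma hasDerivAt_schlafliIntegral (ν : ℝ) {x : ℝ} (hx : 0 < x) :
    HasDerivAt (schlafliIntegral ν)
      (-(schlafliIntegral (ν - 1) x - schlafliIntegral (ν + 1) x) / 2) x := by
  have hderiv := (hasDerivAt_integral_of_dominated_loc_of_deriv_le
    (μ := volume.restrict (Ioi (0 : ℝ))) (x₀ := x)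
    (F := fun x t ↦ exp (-x * sinh t - ν * t))
    (F' := fun x t ↦ -(sinh t * exp (-x * sinh t - ν * t)))
    (bound := fun t ↦ exp (-(x / 2) * sinh t - (ν - 1) * t)) (Ioi_mem_nhds (half_lt_self hx))
    (.of_forall fun y ↦ Continuous.aestronglyMeasurable (by fun_prop))
    (integrableOn_exp_neg_mul_sinh_sub ν hx) (Continuous.aestronglyMeasurable (by fun_prop))
    ((ae_restrict_iff' measurableSet_Ioi).2 (.of_forall fun t (ht : 0 < t) y (hy : x / 2 < y) ↦ ?_))
    (integrableOn_exp_neg_mul_sinh_sub _ (half_pos hx)) (.of_forall fun t y _ ↦ ?_)).2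
  · refine hderiv.congr_deriv ?_
    unfold schlafliIntegral
    rw [← integral_sub (integrableOn_exp_neg_mul_sinh_sub _ hx)
      (integrableOn_exp_neg_mul_sinh_sub _ hx), ← integral_neg, ← integral_div]
    congr 1 with t
    rw [sinh_mul_exp_sub]
    ring
  · have hsinh : 0 ≤ sinh t := sinh_nonneg_iff.2 ht.le
    rw [norm_neg, norm_of_nonneg (mul_nonneg hsinh (exp_pos _).le)]
    have hsinh_le : sinh t ≤ exp t := by linarith [cosh_add_sinh t, cosh_pos t]
    calc sinh t * exp (-y * sinh t - ν * t)
        ≤ exp t * exp (-(x / 2) * sinh t - ν * t) := by gcongr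
      _ = exp (-(x / 2) * sinh t - (ν - 1) * t) := by rw [← exp_add]; ring_nf
  · have hphase : HasDerivAt (fun y ↦ -y * sinh t - ν * t) (-1 * sinh t) y :=
      ((hasDerivAt_id y).neg.mul_const _).sub_const _
    exact hphase.exp.congr_deriv (by ring)

lemma schlafliIntegral_recurrence (ν : ℝ) {x : ℝ} (hx : 0 < x) :
    x * (schlafliIntegral (ν - 1) x + schlafliIntegral (ν + 1) x) =
      2 * (1 - ν * schlafliIntegral ν x) := by
  set E : ℝ → ℝ → ℝ := fun μ t ↦ exp (-x * sinh t - μ * t)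
  have hE : ∀ μ, IntegrableOn (E μ) (Ioi 0) := fun μ ↦ integrableOn_exp_neg_mul_sinh_sub μ hx
  have hderiv : ∀ t ∈ Ici 0, HasDerivAt (E ν)
      (-(x / 2 * (E (ν - 1) t + E (ν + 1) t) + ν * E ν t)) t := fun t _ ↦ by
    have hphase : HasDerivAt (fun t ↦ -x * sinh t - ν * t) (-x * cosh t - ν * 1) t :=
      ((hasDerivAt_sinh t).const_mul (-x)).sub ((hasDerivAt_id t).const_mul ν)
    refine hphase.exp.congr_deriv ?_
    linear_combination -x * cosh_mul_exp_sub (-x * sinh t) ν t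
  have hsum : IntegrableOn (fun t ↦ E (ν - 1) t + E (ν + 1) t) (Ioi 0) :=
    (hE (ν - 1)).add (hE (ν + 1))
  have hderiv_int := ((hsum.const_mul (x / 2)).add ((hE ν).const_mul ν)).neg
  have hftc := integral_Ioi_of_hasDerivAt_of_tendsto' hderiv hderiv_int
    (tendsto_zero_of_hasDerivAt_of_integrableOn_Ioi
      (fun t ht ↦ hderiv t (Ioi_subset_Ici_self ht)) hderiv_int (hE ν))
  rw [integral_neg, integral_add (hsum.const_mul (x / 2)) ((hE ν).const_mul ν),
    integral_const_mul, integral_const_mul, integral_add (hE _) (hE _)] at hftc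
  have hE0 : E ν 0 = 1 := by simp [E]
  unfold schlafliIntegral
  linear_combination -2 * hftc + 2 * hE0

lemma schlafliIntegral_nonneg (ν x : ℝ) : 0 ≤ schlafliIntegral ν x :=
  integral_nonneg fun _ ↦ (exp_pos _).le

lemma integral_exp_neg_mul_Ioi {c : ℝ} (hc : 0 < c) :
    ∫ t in Ioi (0 : ℝ), exp (-c * t) = 1 / c := by
  rw [integral_exp_mul_Ioi (neg_lt_zero.2 hc), mul_zero, exp_zero, neg_div_neg_eq]

lemma schlafliIntegral_le {ν x : ℝ} (hx : 0 ≤ x) (hνx : 0 < x + ν) :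
    schlafliIntegral ν x ≤ 1 / (x + ν) := by
  rw [← integral_exp_neg_mul_Ioi hνx]
  refine integral_mono_of_nonneg (.of_forall fun t ↦ (exp_pos _).le)
    (integrableOn_exp_mul_Ioi (neg_lt_zero.2 hνx) 0)
    ((ae_restrict_iff' measurableSet_Ioi).2 (.of_forall fun t (ht : 0 < t) ↦ exp_le_exp.2 ?_))
  have hsinh := mul_le_mul_of_nonneg_left (self_le_sinh_iff.2 ht.le) hx
  linarith

lemma continuousOn_schlafliIntegral {ν : ℝ} (hν : 0 < ν) :
    ContinuousOn (schlafliIntegral ν) (Ici 0) := by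
  refine continuousOn_of_dominated (bound := fun t ↦ exp (-ν * t))
    (fun y _ ↦ Continuous.aestronglyMeasurable (by fun_prop))
    (fun y (hy : 0 ≤ y) ↦
      (ae_restrict_iff' measurableSet_Ioi).2 (.of_forall fun t (ht : 0 < t) ↦ ?_))
    (integrableOn_exp_mul_Ioi (neg_lt_zero.2 hν) 0)
    (.of_forall fun t ↦ Continuous.continuousOn (by fun_prop))
  rw [norm_of_nonneg (exp_pos _).le, exp_le_exp]
  linarith [mul_nonneg hy (sinh_nonneg_iff.2 ht.le)]

lemma abs_angerIntegral_le (ν x : ℝ) : |angerIntegral ν x| ≤ π := by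
  simpa [angerIntegral, abs_of_pos pi_pos] using
    intervalIntegral.norm_integral_le_of_norm_le_const (a := 0) (b := π) (C := 1)
      (f := fun θ ↦ cos (x * sin θ - ν * θ)) (fun θ _ ↦ abs_cos_le_one _)

-- Shift the variable by `π / 2`, which turns `sin θ` into `cos φ`.
lemma angerIntegral_eq_re (ν x : ℝ) :
    angerIntegral ν x = (Complex.exp (-(ν * π / 2 : ℝ) * Complex.I) *
      ∫ φ in (-(π / 2))..(π / 2), Complex.exp ((x * cos φ : ℝ) * Complex.I) *
        Complex.exp (-(ν * φ) * Complex.I)).re := by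
  have hshift := intervalIntegral.integral_comp_add_right (a := -(π / 2)) (b := π / 2)
    (fun θ ↦ cos (x * sin θ - ν * θ)) (π / 2)
  rw [neg_add_cancel, add_halves] at hshift
  rw [angerIntegral, ← hshift, ← intervalIntegral.integral_const_mul, ← Complex.reCLM_apply,
    ← Complex.reCLM.intervalIntegral_comp_comm (Continuous.intervalIntegrable (by fun_prop) _ _)]
  congr 1 with φ
  rw [Complex.reCLM_apply, ← Complex.exp_add, ← Complex.exp_add, sin_add_pi_div_two,
    ← Complex.exp_ofReal_mul_I_re]
  push_cast
  ring_nf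

lemma tendsto_sqrt_mul_angerIntegral (ν : ℝ) :
    Tendsto (fun x ↦ √x * angerIntegral ν x - √(2 * π) * cos (x - ν * π / 2 - π / 4))
      atTop (𝓝 0) := by
  have hstat := ((tendsto_sqrt_mul_integral_cexp_cos_mul
    (a := fun z ↦ Complex.exp (-(ν * z) * Complex.I)) (by fun_prop)).const_mul
      (Complex.exp (-(ν * π / 2 : ℝ) * Complex.I)))
  simp only [mul_zero, neg_zero, zero_mul, Complex.exp_zero, mul_one] at hstat
  refine (Complex.continuous_re.tendsto' 0 0 Complex.zero_re |>.comp hstat).congr fun x ↦ ?_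
  have hphase : Complex.exp ((x - ν * π / 2 - π / 4 : ℝ) * Complex.I) =
      Complex.exp (-(ν * π / 2 : ℝ) * Complex.I) * Complex.exp ((x - π / 4 : ℝ) * Complex.I) := by
    rw [← Complex.exp_add]; push_cast; ring_nf
  rw [angerIntegral_eq_re, ← Complex.exp_ofReal_mul_I_re, hphase, ← Complex.re_ofReal_mul,
    ← Complex.re_ofReal_mul, ← Complex.sub_re, Function.comp_apply]
  congr 1
  ring

lemma tendsto_sqrt_mul_schlafliIntegral (ν : ℝ) :
    Tendsto (fun x ↦ √x * schlafliIntegral ν x) atTop (𝓝 0) := by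
  have hdecay : Tendsto (fun x ↦ 2 * (√x)⁻¹) atTop (𝓝 0) := by
    simpa using (tendsto_inv_atTop_zero.comp tendsto_sqrt_atTop).const_mul 2
  refine squeeze_zero' (.of_forall fun x ↦ mul_nonneg (sqrt_nonneg x) (schlafliIntegral_nonneg ν x))
    ?_ hdecay
  filter_upwards [eventually_gt_atTop 0, eventually_ge_atTop (-2 * ν)] with x hx hxν
  calc √x * schlafliIntegral ν x ≤ √x * (1 / (x + ν)) := by
        gcongr; exact schlafliIntegral_le hx.le (by linarith)
    _ ≤ √x * (1 / (x / 2)) := by gcongr; linarith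
    _ = 2 * (√x)⁻¹ := by rw [one_div_div, mul_div_left_comm, sqrt_div_self', one_div]

end BesselIntegrals

/-! ### Basic properties of `besselJ` -/

section BesselBasics

open Filter Topology

variable {ν x : ℝ}

lemma hasDerivAt_besselJ (ν : ℝ) (hx : 0 < x) :
    HasDerivAt (besselJ ν) ((besselJ (ν - 1) x - besselJ (ν + 1) x) / 2) x := by
  rw [show besselJ ν = _ from funext (besselJ_eq ν)]
  refine (((hasDerivAt_angerIntegral ν x).sub
    ((hasDerivAt_schlafliIntegral ν hx).const_mul (sin (ν * π)))).div_const π).congr_deriv ?_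
  rw [besselJ_eq, besselJ_eq, sub_one_mul, add_one_mul, sin_sub_pi, sin_add_pi]
  ring

lemma besselJ_recurrence (ν : ℝ) (hx : 0 < x) :
    x * (besselJ (ν - 1) x + besselJ (ν + 1) x) = 2 * ν * besselJ ν x := by
  rw [besselJ_eq, besselJ_eq, besselJ_eq, sub_one_mul, add_one_mul, sin_sub_pi, sin_add_pi]
  linear_combination angerIntegral_recurrence ν x / π +
    sin (ν * π) / π * schlafliIntegral_recurrence ν hx

lemma hasDerivAt_besselJ_of_succ (ν : ℝ) (hx : 0 < x) :
    HasDerivAt (besselJ ν) (ν / x * besselJ ν x - besselJ (ν + 1) x) x := by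
  refine (hasDerivAt_besselJ ν hx).congr_deriv ?_
  field_simp
  linear_combination besselJ_recurrence ν hx

lemma hasDerivAt_besselJ_succ (ν : ℝ) (hx : 0 < x) :
    HasDerivAt (besselJ (ν + 1)) (besselJ ν x - (ν + 1) / x * besselJ (ν + 1) x) x := by
  refine (hasDerivAt_besselJ (ν + 1) hx).congr_deriv ?_
  have hrec := besselJ_recurrence (ν + 1) hx
  rw [add_sub_cancel_right] at hrec ⊢
  field_simp
  linear_combination -hrec

lemma besselJ_apply_zero (hν : 0 < ν) : besselJ ν 0 = 0 := by
  have hA := angerIntegral_recurrence ν 0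
  have hS : schlafliIntegral ν 0 = 1 / ν := by
    rw [← integral_exp_neg_mul_Ioi hν, schlafliIntegral]
    simp only [neg_zero, zero_mul, zero_sub, neg_mul]
  rw [besselJ_eq, hS]
  field_simp
  linarith

lemma continuousOn_besselJ (hν : 0 < ν) : ContinuousOn (besselJ ν) (Ici 0) := by
  rw [show besselJ ν = _ from funext (besselJ_eq ν)]
  exact (ContinuousOn.sub (fun x _ ↦ (hasDerivAt_angerIntegral ν x).continuousAt.continuousWithinAt)
    (continuousOn_const.mul (continuousOn_schlafliIntegral hν))).div_const π

lemma abs_besselJ_le_two (hx : 1 ≤ x) (hν : 0 ≤ ν) : |besselJ ν x| ≤ 2 := by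
  have hS : |schlafliIntegral ν x| ≤ 1 := by
    rw [abs_of_nonneg (schlafliIntegral_nonneg ν x)]
    exact (schlafliIntegral_le (by linarith) (by linarith)).trans
      ((div_le_one (by linarith)).2 (by linarith))
  have hsinS : |sin (ν * π) * schlafliIntegral ν x| ≤ 1 := by
    rw [abs_mul]
    exact mul_le_one₀ (abs_sin_le_one _) (abs_nonneg _) hS
  rw [besselJ_eq, abs_div, abs_of_pos pi_pos, div_le_iff₀ pi_pos]
  linarith [abs_sub (angerIntegral ν x) (sin (ν * π) * schlafliIntegral ν x),
    abs_angerIntegral_le ν x, pi_gt_three]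

lemma tendsto_sqrt_mul_besselJ (ν : ℝ) :
    Tendsto (fun x ↦ √x * besselJ ν x - √(2 / π) * cos (x - ν * π / 2 - π / 4)) atTop (𝓝 0) := by
  have hlim := ((tendsto_sqrt_mul_angerIntegral ν).sub
    ((tendsto_sqrt_mul_schlafliIntegral ν).const_mul (sin (ν * π)))).div_const π
  rw [mul_zero, sub_zero, zero_div] at hlim
  refine hlim.congr fun x ↦ ?_
  have hsqrt : √(2 / π) = √(2 * π) / π := by
    rw [show 2 / π = 2 * π / π ^ 2 by field_simp, sqrt_div (by positivity), sqrt_sq pi_pos.le]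
  rw [besselJ_eq, hsqrt]
  ring

end BesselBasics

/-! ### Perturbed harmonic oscillators -/

section Oscillator

open Filter Topology

variable {u v : ℝ → ℝ}

lemma antitoneOn_oscillator_energy {c : ℝ} (hu : ∀ x, 0 < x → HasDerivAt u (v x) x)
    (hv : ∀ x, 0 < x → HasDerivAt v (-u x + c / x ^ 2 * u x) x) :
    AntitoneOn (fun x ↦ (u x ^ 2 + v x ^ 2) * exp (|c| / x)) (Ioi 0) := by
  have hderiv : ∀ x ∈ Ioi (0 : ℝ), HasDerivAt (fun x ↦ (u x ^ 2 + v x ^ 2) * exp (|c| / x))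
      ((c * (2 * u x * v x) - |c| * (u x ^ 2 + v x ^ 2)) * (exp (|c| / x) / x ^ 2)) x :=
    fun x hx ↦ by
      have hx0 : x ≠ 0 := ne_of_gt hx
      have henergy := ((hu x hx).pow 2).add ((hv x hx).pow 2)
      have hweight := ((hasDerivAt_const x |c|).div (hasDerivAt_id x) hx0).exp
      refine (henergy.mul hweight).congr_deriv ?_
      simp only [Pi.div_apply, id, Pi.add_apply, Pi.pow_apply]
      field_simp
      ring
  refine antitoneOn_of_hasDerivWithinAt_nonpos (convex_Ioi 0)
    (fun x hx ↦ (hderiv x hx).continuousAt.continuousWithinAt)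
    (fun x hx ↦ (hderiv x (interior_subset hx)).hasDerivWithinAt) fun x _ ↦ ?_
  have hmixed : |2 * u x * v x| ≤ u x ^ 2 + v x ^ 2 :=
    abs_le.2 ⟨by linarith [sq_nonneg (u x + v x)], by linarith [sq_nonneg (u x - v x)]⟩
  have hwork : c * (2 * u x * v x) ≤ |c| * (u x ^ 2 + v x ^ 2) :=
    (le_abs_self _).trans (by rw [abs_mul]; gcongr)
  exact mul_nonpos_of_nonpos_of_nonneg (by linarith) (by positivity)

-- `w y = u y cos (y - x) - v y sin (y - x)` satisfies `w' = -r sin (y - x)` and agrees with `u` at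
-- the points `x + 2πn`.
lemma abs_oscillator_add_two_pi_sub_le {r : ℝ → ℝ} {x D : ℝ} (hx : 0 < x)
    (hu : ∀ y, x ≤ y → HasDerivAt u (v y) y) (hv : ∀ y, x ≤ y → HasDerivAt v (-u y + r y) y)
    (hr : ∀ y, x ≤ y → |r y| ≤ D / y ^ 2) (n : ℕ) :
    |u (x + n * (2 * π)) - u x| ≤ D / x := by
  set w : ℝ → ℝ := fun y ↦ u y * cos (y - x) - v y * sin (y - x)
  have hw : ∀ y, x ≤ y → HasDerivAt w (-(r y * sin (y - x))) y := fun y hy ↦ by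
    have hcos : HasDerivAt (fun y ↦ cos (y - x)) (-sin (y - x) * 1) y :=
      ((hasDerivAt_id y).sub_const x).cos
    have hsin : HasDerivAt (fun y ↦ sin (y - x)) (cos (y - x) * 1) y :=
      ((hasDerivAt_id y).sub_const x).sin
    exact (((hu y hy).mul hcos).sub ((hv y hy).mul hsin)).congr_deriv (by ring)
  have hbound : ∀ y, x ≤ y → HasDerivAt (fun y ↦ D * (x⁻¹ - y⁻¹)) (D / y ^ 2) y := fun y hy ↦
    (((hasDerivAt_inv (hx.trans_le hy).ne').const_sub x⁻¹).const_mul D).congr_deriv (by ring)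
  have hz : x ≤ x + n * (2 * π) := by linarith [mul_nonneg n.cast_nonneg two_pi_pos.le]
  have hdiff : ‖w (x + n * (2 * π)) - w x‖ ≤ D * (x⁻¹ - (x + n * (2 * π))⁻¹) :=
    image_norm_le_of_norm_deriv_right_le_deriv_boundary' (f := fun y ↦ w y - w x)
      (fun y hy ↦ ((hw y hy.1).sub_const _).continuousAt.continuousWithinAt)
      (fun y hy ↦ ((hw y hy.1).sub_const _).hasDerivWithinAt) (by simp)
      (fun y hy ↦ (hbound y hy.1).continuousAt.continuousWithinAt)
      (fun y hy ↦ (hbound y hy.1).hasDerivWithinAt)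
      (fun y hy ↦ by
        rw [norm_neg, norm_mul]
        exact (mul_le_of_le_one_right (norm_nonneg _) (abs_sin_le_one _)).trans (hr y hy.1))
      ⟨hz, le_rfl⟩
  have hwz : w (x + n * (2 * π)) = u (x + n * (2 * π)) := by
    simp only [w, add_sub_cancel_left, cos_nat_mul_two_pi,
      show sin (n * (2 * π)) = 0 by rw [← sin_add_nat_mul_two_pi 0 n |>.trans sin_zero, zero_add]]
    ring
  have hwx : w x = u x := by simp [w]
  have hD : 0 ≤ D := by
    have := (abs_nonneg _).trans (hr x le_rfl)
    rwa [le_div_iff₀ (by positivity), zero_mul] at this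
  rw [hwz, hwx, norm_eq_abs] at hdiff
  refine hdiff.trans ?_
  rw [div_eq_mul_inv]
  have : 0 ≤ (x + n * (2 * π))⁻¹ := inv_nonneg.2 (hx.le.trans hz)
  gcongr
  linarith

lemma abs_oscillator_sub_periodic_le {r p : ℝ → ℝ} {x D : ℝ} (hx : 0 < x)
    (hu : ∀ y, x ≤ y → HasDerivAt u (v y) y) (hv : ∀ y, x ≤ y → HasDerivAt v (-u y + r y) y)
    (hr : ∀ y, x ≤ y → |r y| ≤ D / y ^ 2) (hp : Function.Periodic p (2 * π))
    (hlim : Tendsto (fun y ↦ u y - p y) atTop (𝓝 0)) : |u x - p x| ≤ D / x := by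
  have hseq : Tendsto (fun n : ℕ ↦ x + n * (2 * π)) atTop atTop :=
    tendsto_atTop_add_const_left _ _ (tendsto_natCast_atTop_atTop.atTop_mul_const two_pi_pos)
  have hlim_seq : Tendsto (fun n : ℕ ↦ u (x + n * (2 * π)) - u x) atTop (𝓝 (p x - u x)) := by
    have h := (hlim.comp hseq).add_const (p x - u x)
    rw [zero_add] at h
    refine h.congr fun n ↦ ?_
    rw [Function.comp_apply, hp.nat_mul n x]
    ring
  rw [abs_sub_comm]
  exact le_of_tendsto hlim_seq.abs (.of_forall (abs_oscillator_add_two_pi_sub_le hx hu hv hr))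

end Oscillator

/-! ### Asymptotics of `√x J_ν(x)`, uniform in the order -/

section BesselAsymptotics

variable {ν x : ℝ}

/-- The Liouville normal form `√x J_ν(x)`, a solution of `u'' = -u + (ν² - 1/4) u / x²`. -/
noncomputable def liouvilleBessel (ν x : ℝ) : ℝ := √x * besselJ ν x

/-- The derivative of `liouvilleBessel ν` on `(0, ∞)`. -/
noncomputable def liouvilleBesselDeriv (ν x : ℝ) : ℝ :=
  (ν + 1 / 2) / x * liouvilleBessel ν x - √x * besselJ (ν + 1) x

/-- The leading term of `liouvilleBessel ν` at infinity. -/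
noncomputable def besselCosine (ν x : ℝ) : ℝ := √(2 / π) * cos (x - ν * π / 2 - π / 4)

lemma sqrt_two_div_pi_pos : 0 < √(2 / π) := sqrt_pos.2 (by positivity)

lemma hasDerivAt_sqrt_eq_div (hx : 0 < x) : HasDerivAt sqrt (√x / (2 * x)) x := by
  refine (hasDerivAt_sqrt hx.ne').congr_deriv ?_
  rw [div_eq_div_iff (mul_pos two_pos (sqrt_pos.2 hx)).ne' (by positivity)]
  linear_combination (-2) * mul_self_sqrt hx.le

lemma hasDerivAt_liouvilleBessel (ν : ℝ) (hx : 0 < x) :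
    HasDerivAt (liouvilleBessel ν) (liouvilleBesselDeriv ν x) x := by
  refine ((hasDerivAt_sqrt_eq_div hx).mul (hasDerivAt_besselJ_of_succ ν hx)).congr_deriv ?_
  unfold liouvilleBesselDeriv liouvilleBessel
  field_simp
  ring

lemma hasDerivAt_liouvilleBesselDeriv (ν : ℝ) (hx : 0 < x) :
    HasDerivAt (liouvilleBesselDeriv ν)
      (-liouvilleBessel ν x + (ν ^ 2 - 1 / 4) / x ^ 2 * liouvilleBessel ν x) x := by
  have hfst := ((hasDerivAt_const x (ν + 1 / 2)).div (hasDerivAt_id x) hx.ne').mul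
    (hasDerivAt_liouvilleBessel ν hx)
  have hsnd := (hasDerivAt_sqrt_eq_div hx).mul (hasDerivAt_besselJ_succ ν hx)
  refine (hfst.sub hsnd).congr_deriv ?_
  simp only [Pi.div_apply, id]
  unfold liouvilleBesselDeriv liouvilleBessel
  field_simp
  ring

lemma antitoneOn_liouvilleBessel_energy (ν : ℝ) :
    AntitoneOn (fun x ↦ (liouvilleBessel ν x ^ 2 + liouvilleBesselDeriv ν x ^ 2) *
      exp (|ν ^ 2 - 1 / 4| / x)) (Ioi 0) :=
  antitoneOn_oscillator_energy (fun _ ↦ hasDerivAt_liouvilleBessel ν)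
    (fun _ ↦ hasDerivAt_liouvilleBesselDeriv ν)

lemma abs_liouvilleBessel_sub_besselCosine_le {D : ℝ} (hx : 0 < x)
    (hD : ∀ y, x ≤ y → |(ν ^ 2 - 1 / 4) * liouvilleBessel ν y| ≤ D) :
    |liouvilleBessel ν x - besselCosine ν x| ≤ D / x := by
  refine abs_oscillator_sub_periodic_le hx
    (fun y hy ↦ hasDerivAt_liouvilleBessel ν (hx.trans_le hy))
    (fun y hy ↦ hasDerivAt_liouvilleBesselDeriv ν (hx.trans_le hy)) (fun y hy ↦ ?_)
    (fun y ↦ ?_) (tendsto_sqrt_mul_besselJ ν)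
  · rw [div_mul_eq_mul_div, abs_div, abs_of_nonneg (sq_nonneg y)]
    gcongr
    exact hD y hy
  · rw [besselCosine, besselCosine,
      show y + 2 * π - ν * π / 2 - π / 4 = y - ν * π / 2 - π / 4 + 2 * π by ring, cos_add_two_pi]

lemma abs_sq_sub_quarter_le {N : ℝ} (hν : 0 ≤ ν) (hνN : ν ≤ N) : |ν ^ 2 - 1 / 4| ≤ N ^ 2 + 1 := by
  have hsq : ν ^ 2 ≤ N ^ 2 := by gcongr
  rw [abs_le]
  constructor <;> linarith [sq_nonneg ν]

lemma liouvilleBessel_energy_one_le {N : ℝ} (hν : 0 ≤ ν) (hνN : ν ≤ N) :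
    liouvilleBessel ν 1 ^ 2 + liouvilleBesselDeriv ν 1 ^ 2 ≤ 2 ^ 2 + (2 * N + 3) ^ 2 := by
  have hJ := abs_besselJ_le_two le_rfl hν
  have hJ' := abs_besselJ_le_two le_rfl (by linarith : 0 ≤ ν + 1)
  have hu : liouvilleBessel ν 1 = besselJ ν 1 := by simp [liouvilleBessel]
  have hv : liouvilleBesselDeriv ν 1 = (ν + 1 / 2) * besselJ ν 1 - besselJ (ν + 1) 1 := by
    simp [liouvilleBesselDeriv, hu]
  have hv_le : |liouvilleBesselDeriv ν 1| ≤ 2 * N + 3 := by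
    calc |liouvilleBesselDeriv ν 1| ≤ |(ν + 1 / 2) * besselJ ν 1| + |besselJ (ν + 1) 1| := by
          rw [hv]; exact abs_sub _ _
      _ ≤ (N + 1 / 2) * 2 + 2 := by
          rw [abs_mul, abs_of_nonneg (by linarith : 0 ≤ ν + 1 / 2)]
          gcongr
          linarith
      _ = 2 * N + 3 := by ring
  exact add_le_add (sq_le_sq' (abs_le.1 (hu ▸ hJ)).1 (abs_le.1 (hu ▸ hJ)).2)
    (sq_le_sq' (abs_le.1 hv_le).1 (abs_le.1 hv_le).2)

lemma exists_abs_liouvilleBessel_le (N : ℝ) :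
    ∃ M, 0 < M ∧ ∀ ν, 0 ≤ ν → ν ≤ N → ∀ x, 1 ≤ x → |liouvilleBessel ν x| ≤ M := by
  refine ⟨√((2 ^ 2 + (2 * N + 3) ^ 2) * exp (N ^ 2 + 1)), sqrt_pos.2 (by positivity),
    fun ν hν hνN x hx ↦ abs_le_sqrt ?_⟩
  have hx0 : 0 < x := one_pos.trans_le hx
  calc liouvilleBessel ν x ^ 2
      ≤ liouvilleBessel ν x ^ 2 + liouvilleBesselDeriv ν x ^ 2 :=
        le_add_of_nonneg_right (sq_nonneg _)
    _ ≤ (liouvilleBessel ν x ^ 2 + liouvilleBesselDeriv ν x ^ 2) * exp (|ν ^ 2 - 1 / 4| / x) :=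
        le_mul_of_one_le_right (by positivity) (one_le_exp (by positivity))
    _ ≤ (liouvilleBessel ν 1 ^ 2 + liouvilleBesselDeriv ν 1 ^ 2) * exp (|ν ^ 2 - 1 / 4| / 1) :=
        antitoneOn_liouvilleBessel_energy ν (mem_Ioi.2 one_pos) hx0 hx
    _ ≤ (2 ^ 2 + (2 * N + 3) ^ 2) * exp (N ^ 2 + 1) := by
        rw [div_one]
        exact mul_le_mul (liouvilleBessel_energy_one_le hν hνN)
          (exp_le_exp.2 (abs_sq_sub_quarter_le hν hνN)) (exp_pos _).le (by positivity)

lemma exists_abs_liouvilleBessel_sub_besselCosine_le (N : ℝ) :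
    ∃ C, 0 < C ∧ ∀ ν, 0 ≤ ν → ν ≤ N → ∀ x, 1 ≤ x →
      |liouvilleBessel ν x - besselCosine ν x| ≤ C / x := by
  obtain ⟨M, hM, hbound⟩ := exists_abs_liouvilleBessel_le N
  refine ⟨(N ^ 2 + 1) * M, by positivity, fun ν hν hνN x hx ↦
    abs_liouvilleBessel_sub_besselCosine_le (one_pos.trans_le hx) fun y hy ↦ ?_⟩
  rw [abs_mul]
  gcongr
  · exact abs_sq_sub_quarter_le hν hνN
  · exact hbound ν hν hνN y (hx.trans hy)

lemma liouvilleBessel_eq_zero_iff (hx : 0 < x) : liouvilleBessel ν x = 0 ↔ besselJ ν x = 0 :=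
  mul_eq_zero_iff_left (sqrt_pos.2 hx).ne'

lemma liouvilleBessel_half (hx : 0 < x) : liouvilleBessel (1 / 2) x = √(2 / π) * sin x := by
  have hexact := abs_liouvilleBessel_sub_besselCosine_le (ν := 1 / 2) (D := 0) hx
    fun y _ ↦ by norm_num
  rw [zero_div, abs_nonpos_iff, sub_eq_zero] at hexact
  rw [hexact, besselCosine, show x - 1 / 2 * π / 2 - π / 4 = x - π / 2 by ring, cos_sub_pi_div_two]

lemma besselJ_half_eq_zero_iff (hx : 0 < x) : besselJ (1 / 2) x = 0 ↔ sin x = 0 := by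
  rw [← liouvilleBessel_eq_zero_iff hx, liouvilleBessel_half hx,
    mul_eq_zero_iff_left (ne_of_gt sqrt_two_div_pi_pos)]

-- By monotonicity of the energy a common zero would make `J_ν` vanish from there on, contrary to
-- its asymptotics.
lemma besselJ_succ_ne_zero (hx : 0 < x) (hJ : besselJ ν x = 0) : besselJ (ν + 1) x ≠ 0 := by
  intro hJ'
  have hu : liouvilleBessel ν x = 0 := (liouvilleBessel_eq_zero_iff hx).2 hJ
  have hv : liouvilleBesselDeriv ν x = 0 := by rw [liouvilleBesselDeriv, hu, hJ']; ring
  have hvanish : ∀ y, x ≤ y → liouvilleBessel ν y = 0 := fun y hy ↦ by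
    have henergy := antitoneOn_liouvilleBessel_energy ν hx (hx.trans_le hy) hy
    simp only [hu, hv, ne_eq, OfNat.ofNat_ne_zero, not_false_eq_true, zero_pow, add_zero,
      zero_mul] at henergy
    have hsum := nonpos_of_mul_nonpos_left henergy (exp_pos _)
    exact pow_eq_zero_iff two_ne_zero |>.1
      (le_antisymm (by linarith [sq_nonneg (liouvilleBesselDeriv ν y)]) (sq_nonneg _))
  obtain ⟨n, hn⟩ := exists_nat_ge ((x - (ν * π / 2 + π / 4)) / (2 * π))
  rw [div_le_iff₀ two_pi_pos] at hn
  set y := ν * π / 2 + π / 4 + n * (2 * π) with hy_def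
  have hy : x ≤ y := by linarith
  have hasymp := abs_liouvilleBessel_sub_besselCosine_le (ν := ν) (D := 0) (hx.trans_le hy)
    fun z hz ↦ by rw [hvanish z (hy.trans hz), mul_zero, abs_zero]
  rw [zero_div, abs_nonpos_iff, hvanish y hy, zero_sub, neg_eq_zero, besselCosine,
    show y - ν * π / 2 - π / 4 = n * (2 * π) by rw [hy_def]; ring, cos_nat_mul_two_pi,
    mul_one] at hasymp
  exact sqrt_two_div_pi_pos.ne' hasymp

end BesselAsymptotics

/-! ### Zeros near the McMahon points -/

section McMahon

variable {ν x : ℝ} {m : ℤ}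

/-- The leading term `π (m + ν/2 - 1/4)` of McMahon's expansion of the `m`-th zero of `J_ν`. -/
noncomputable def mcMahonPoint (ν : ℝ) (m : ℤ) : ℝ := π * (m + ν / 2 - 1 / 4)

lemma exists_abs_sub_mcMahonPoint_le (ν x : ℝ) : ∃ m, |x - mcMahonPoint ν m| ≤ π / 2 := by
  set t := (x - ν * π / 2 + π / 4) / π with ht
  refine ⟨round t, ?_⟩
  have hdist : x - mcMahonPoint ν (round t) = π * (t - round t) := by
    rw [mcMahonPoint, mul_sub π t, ht, mul_div_cancel₀ _ pi_ne_zero]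
    ring
  rw [hdist, abs_mul, abs_of_pos pi_pos]
  linarith [mul_le_mul_of_nonneg_left (abs_sub_round t) pi_pos.le]

lemma cos_int_mul_pi_mul_self (m : ℤ) : cos (m * π) * cos (m * π) = 1 := by
  rw [← abs_mul_abs_self, abs_cos_int_mul_pi, one_mul]

lemma besselCosine_mcMahonPoint_add (ν : ℝ) (m : ℤ) (s : ℝ) :
    besselCosine ν (mcMahonPoint ν m + s) = cos (m * π) * (√(2 / π) * sin s) := by
  rw [besselCosine, mcMahonPoint,
    show π * (m + ν / 2 - 1 / 4) + s - ν * π / 2 - π / 4 = m * π + s - π / 2 by ring,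
    cos_sub_pi_div_two, sin_add, sin_int_mul_pi]
  ring

lemma exists_abs_mul_liouvilleBessel_sub_sin_le (N : ℝ) :
    ∃ C, 0 < C ∧ ∀ ν, 0 ≤ ν → ν ≤ N → ∀ m s, 1 ≤ mcMahonPoint ν m + s →
      |cos (m * π) * liouvilleBessel ν (mcMahonPoint ν m + s) - √(2 / π) * sin s| ≤
        C / (mcMahonPoint ν m + s) := by
  obtain ⟨C, hC, hasymp⟩ := exists_abs_liouvilleBessel_sub_besselCosine_le N
  refine ⟨C, hC, fun ν hν hνN m s hs ↦ ?_⟩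
  have hfactor : cos (m * π) * liouvilleBessel ν (mcMahonPoint ν m + s) - √(2 / π) * sin s =
      cos (m * π) * (liouvilleBessel ν (mcMahonPoint ν m + s) -
        besselCosine ν (mcMahonPoint ν m + s)) := by
    rw [besselCosine_mcMahonPoint_add]
    linear_combination √(2 / π) * sin s * cos_int_mul_pi_mul_self m
  rw [hfactor, abs_mul, abs_cos_int_mul_pi, one_mul]
  exact hasymp ν hν hνN _ hs

lemma exists_abs_zero_sub_mcMahonPoint_le (N : ℝ) :
    ∃ C, 0 < C ∧ ∀ ν, 0 ≤ ν → ν ≤ N → ∀ j, 1 ≤ j → besselJ ν j = 0 →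
      ∃ m, |j - mcMahonPoint ν m| ≤ C / j := by
  obtain ⟨C, hC, hasymp⟩ := exists_abs_mul_liouvilleBessel_sub_sin_le N
  have hκ := sqrt_two_div_pi_pos
  refine ⟨C / (√(2 / π) * (2 / π)), by positivity, fun ν hν hνN j hj hzero ↦ ?_⟩
  obtain ⟨m, hm⟩ := exists_abs_sub_mcMahonPoint_le ν j
  set s := j - mcMahonPoint ν m
  have hjs : mcMahonPoint ν m + s = j := add_sub_cancel _ _
  have hsin : √(2 / π) * |sin s| ≤ C / j := by
    have := hasymp ν hν hνN m s (hjs ▸ hj)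
    rwa [hjs, (liouvilleBessel_eq_zero_iff (by linarith)).2 hzero, mul_zero, zero_sub, abs_neg,
      abs_mul, abs_of_pos hκ] at this
  refine ⟨m, ?_⟩
  rw [div_right_comm, le_div_iff₀' (by positivity), mul_assoc]
  exact (mul_le_mul_of_nonneg_left (mul_abs_le_abs_sin hm) hκ.le).trans hsin

lemma inv_pi_le_sin_half : π⁻¹ ≤ sin (1 / 2) := by
  have := mul_le_sin (x := 1 / 2) (by norm_num) (by linarith [pi_gt_three])
  rwa [div_mul_div_comm, mul_one, mul_comm π, div_mul_cancel_left₀ two_ne_zero] at this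

lemma exists_zero_near_mcMahonPoint (N : ℝ) :
    ∃ X, 1 ≤ X ∧ ∀ ν, 0 ≤ ν → ν ≤ N → ∀ m, X ≤ mcMahonPoint ν m - 1 / 2 →
      ∃ j, besselJ ν j = 0 ∧ |j - mcMahonPoint ν m| ≤ 1 / 2 := by
  obtain ⟨C, -, hasymp⟩ := exists_abs_mul_liouvilleBessel_sub_sin_le N
  have hκ : 0 < √(2 / π) * π⁻¹ := mul_pos sqrt_two_div_pi_pos (inv_pos.2 pi_pos)
  refine ⟨max 1 (C / (√(2 / π) * π⁻¹)), le_max_left _ _, fun ν hν hνN m hm ↦ ?_⟩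
  rw [max_le_iff] at hm
  have herror : ∀ x, mcMahonPoint ν m - 1 / 2 ≤ x → C / x ≤ √(2 / π) * sin (1 / 2) := fun x hx ↦ by
    refine ((div_le_comm₀ hκ (by linarith)).1 (hm.2.trans hx)).trans ?_
    gcongr
    exact inv_pi_le_sin_half
  set c := mcMahonPoint ν m
  have hleft : cos (m * π) * liouvilleBessel ν (c + -(1 / 2)) ≤ 0 := by
    have h := (hasymp ν hν hνN m (-(1 / 2)) (by linarith)).trans (herror _ (by linarith))
    rw [sin_neg] at h
    linarith [(abs_le.1 h).2]
  have hright : 0 ≤ cos (m * π) * liouvilleBessel ν (c + 1 / 2) := by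
    have h := (hasymp ν hν hνN m (1 / 2) (by linarith)).trans (herror _ (by linarith))
    linarith [(abs_le.1 h).1]
  have hcont : ContinuousOn (fun x ↦ cos (m * π) * liouvilleBessel ν x)
      (Icc (c + -(1 / 2)) (c + 1 / 2)) := fun x hx ↦ by
    have hu := hasDerivAt_liouvilleBessel ν (by linarith [hx.1] : 0 < x)
    exact (hu.continuousAt.const_mul _).continuousWithinAt
  obtain ⟨j, hj, hzero⟩ := intermediate_value_Icc (by linarith) hcont ⟨hleft, hright⟩
  have hcos : cos (m * π) ≠ 0 := left_ne_zero_of_mul_eq_one (cos_int_mul_pi_mul_self m)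
  exact ⟨j, (liouvilleBessel_eq_zero_iff (by linarith [hj.1])).1
    ((mul_eq_zero_iff_left hcos).1 hzero), abs_le.2 ⟨by linarith [hj.1], by linarith [hj.2]⟩⟩

end McMahon

/-! ### Sturm comparison -/

section Sturm

open Filter Topology

/-- `y` solves the Sturm–Liouville equation `(p y')' = q y` on `(a, b)`, with flux `z = p y'`.
Both `y` and `z` are required to extend continuously to `[a, b]`, but `p` and `q` may be singular at
the end points. -/
structure SturmLiouvilleOn (p q y z : ℝ → ℝ) (a b : ℝ) : Prop where
  continuousOn : ContinuousOn y (Icc a b)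
  continuousOn_flux : ContinuousOn z (Icc a b)
  hasDerivAt : ∀ x ∈ Ioo a b, HasDerivAt y (z x / p x) x
  hasDerivAt_flux : ∀ x ∈ Ioo a b, HasDerivAt z (q x * y x) x

namespace SturmLiouvilleOn

variable {p q q₁ q₂ y y₁ y₂ z z₁ z₂ : ℝ → ℝ} {a b : ℝ}

lemma const_mul (h : SturmLiouvilleOn p q y z a b) (s : ℝ) :
    SturmLiouvilleOn p q (fun x ↦ s * y x) (fun x ↦ s * z x) a b where
  continuousOn := continuousOn_const.mul h.continuousOn
  continuousOn_flux := continuousOn_const.mul h.continuousOn_flux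
  hasDerivAt x hx := ((h.hasDerivAt x hx).const_mul s).congr_deriv (mul_div_assoc _ _ _).symm
  hasDerivAt_flux x hx := ((h.hasDerivAt_flux x hx).const_mul s).congr_deriv (mul_left_comm _ _ _)

lemma mono (h : SturmLiouvilleOn p q y z a b) {a' b' : ℝ} (ha : a ≤ a') (hb : b' ≤ b) :
    SturmLiouvilleOn p q y z a' b' where
  continuousOn := h.continuousOn.mono (Icc_subset_Icc ha hb)
  continuousOn_flux := h.continuousOn_flux.mono (Icc_subset_Icc ha hb)
  hasDerivAt x hx := h.hasDerivAt x (Ioo_subset_Ioo ha hb hx)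
  hasDerivAt_flux x hx := h.hasDerivAt_flux x (Ioo_subset_Ioo ha hb hx)

lemma exists_flux_eq (h : SturmLiouvilleOn p q y z a b) (hp : ∀ x ∈ Ioo a b, 0 < p x)
    (hab : a < b) : ∃ c ∈ Ioo a b, z c = p c * ((y b - y a) / (b - a)) := by
  obtain ⟨c, hc, hslope⟩ := exists_hasDerivAt_eq_slope y _ hab h.continuousOn h.hasDerivAt
  exact ⟨c, hc, by rw [← hslope, mul_div_cancel₀ _ (hp c hc).ne']⟩

lemma flux_left_nonneg (h : SturmLiouvilleOn p q y z a b) (hp : ∀ x ∈ Ioo a b, 0 < p x)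
    (hab : a < b) (ha : y a = 0) (hy : ∀ x ∈ Ioo a b, 0 < y x) : 0 ≤ z a := by
  by_contra! hneg
  have hnear : ∀ᶠ x in 𝓝[>] a, z x < 0 :=
    ((h.continuousOn_flux a (left_mem_Icc.2 hab.le)).mono_of_mem_nhdsWithin
      (Icc_mem_nhdsGT hab)).eventually_lt_const hneg
  obtain ⟨e, he, hsub⟩ := (mem_nhdsGT_iff_exists_Ioo_subset' hab).1 hnear
  obtain ⟨x, hax, hx⟩ := exists_between (lt_min he hab)
  have hxe := hx.trans_le (min_le_left _ _)
  have hxb := hx.trans_le (min_le_right _ _)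
  obtain ⟨c, hc, hz⟩ := (h.mono le_rfl hxb.le).exists_flux_eq
    (fun x hx ↦ hp x ⟨hx.1, hx.2.trans hxb⟩) hax
  have hzc : z c < 0 := hsub ⟨hc.1, hc.2.trans hxe⟩
  refine hzc.not_gt ?_
  rw [hz, ha, sub_zero]
  exact mul_pos (hp c ⟨hc.1, hc.2.trans hxb⟩) (div_pos (hy x ⟨hax, hxb⟩) (sub_pos.2 hax))

lemma reflect (h : SturmLiouvilleOn p q y z a b) :
    SturmLiouvilleOn (fun x ↦ p (-x)) (fun x ↦ q (-x)) (fun x ↦ y (-x)) (fun x ↦ -z (-x))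
      (-b) (-a) := by
  have hIcc : MapsTo Neg.neg (Icc (-b) (-a)) (Icc a b) := fun x hx ↦
    ⟨le_neg.1 hx.2, neg_le.1 hx.1⟩
  have hIoo : MapsTo Neg.neg (Ioo (-b) (-a)) (Ioo a b) := fun x hx ↦
    ⟨lt_neg.1 hx.2, neg_lt.1 hx.1⟩
  refine ⟨h.continuousOn.comp continuousOn_neg hIcc,
    (h.continuousOn_flux.comp continuousOn_neg hIcc).neg, fun x hx ↦ ?_, fun x hx ↦ ?_⟩
  · exact ((h.hasDerivAt _ (hIoo hx)).scomp x (hasDerivAt_neg x)).congr_deriv (by simp [neg_div])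
  · exact ((h.hasDerivAt_flux _ (hIoo hx)).scomp x (hasDerivAt_neg x)).neg.congr_deriv (by simp)

lemma flux_right_nonpos (h : SturmLiouvilleOn p q y z a b) (hp : ∀ x ∈ Ioo a b, 0 < p x)
    (hab : a < b) (hb : y b = 0) (hy : ∀ x ∈ Ioo a b, 0 < y x) : z b ≤ 0 := by
  have hIoo : MapsTo Neg.neg (Ioo (-b) (-a)) (Ioo a b) := fun x hx ↦
    ⟨lt_neg.1 hx.2, neg_lt.1 hx.1⟩
  have := h.reflect.flux_left_nonneg (fun x hx ↦ hp _ (hIoo hx)) (neg_lt_neg hab)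
    (by simpa using hb) fun x hx ↦ hy _ (hIoo hx)
  simpa using this

-- The Wronskian `y₁ z₂ - z₁ y₂` would be strictly increasing, nonnegative at `a` and nonpositive
-- at `b`.
lemma not_forall_pos (h₁ : SturmLiouvilleOn p q₁ y₁ z₁ a b) (h₂ : SturmLiouvilleOn p q₂ y₂ z₂ a b)
    (hp : ∀ x ∈ Ioo a b, 0 < p x) (hq : ∀ x ∈ Ioo a b, q₁ x < q₂ x) (hab : a < b) (ha : y₂ a = 0)
    (hb : y₂ b = 0) (hy₂ : ∀ x ∈ Ioo a b, 0 < y₂ x) : ¬∀ x ∈ Ioo a b, 0 < y₁ x := by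
  intro hy₁
  have hwronskian : StrictMonoOn (fun x ↦ y₁ x * z₂ x - z₁ x * y₂ x) (Icc a b) := by
    refine strictMonoOn_of_hasDerivWithinAt_pos (convex_Icc a b)
      (f' := fun x ↦ (q₂ x - q₁ x) * (y₁ x * y₂ x))
      ((h₁.continuousOn.mul h₂.continuousOn_flux).sub (h₁.continuousOn_flux.mul h₂.continuousOn))
      ?_ ?_ <;> rw [interior_Icc] <;> intro x hx
    · exact (((h₁.hasDerivAt x hx).mul (h₂.hasDerivAt_flux x hx)).sub
        ((h₁.hasDerivAt_flux x hx).mul (h₂.hasDerivAt x hx))).congr_deriv (by ring)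
        |>.hasDerivWithinAt
    · exact mul_pos (sub_pos.2 (hq x hx)) (mul_pos (hy₁ x hx) (hy₂ x hx))
  have hnonneg : ∀ x ∈ Icc a b, 0 ≤ y₁ x := by
    rw [← closure_Ioo hab.ne]
    exact le_on_closure (fun x hx ↦ (hy₁ x hx).le) continuousOn_const
      (closure_Ioo hab.ne ▸ h₁.continuousOn)
  have hlt := hwronskian (left_mem_Icc.2 hab.le) (right_mem_Icc.2 hab.le) hab
  simp only [ha, hb, mul_zero, sub_zero] at hlt
  have hleft := mul_nonneg (hnonneg a (left_mem_Icc.2 hab.le)) (h₂.flux_left_nonneg hp hab ha hy₂)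
  have hright := mul_nonpos_of_nonneg_of_nonpos (hnonneg b (right_mem_Icc.2 hab.le))
    (h₂.flux_right_nonpos hp hab hb hy₂)
  linarith

end SturmLiouvilleOn

lemma exists_forall_mul_pos_of_ne_zero {f : ℝ → ℝ} {a b : ℝ} (hf : ContinuousOn f (Ioo a b))
    (hne : ∀ x ∈ Ioo a b, f x ≠ 0) : ∃ s, ∀ x ∈ Ioo a b, 0 < s * f x := by
  rcases (Ioo a b).eq_empty_or_nonempty with hempty | ⟨m, hm⟩
  · simp [hempty]
  refine ⟨f m, fun x hx ↦ ?_⟩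
  by_contra! hneg
  obtain ⟨y, hy, hzero⟩ := isPreconnected_Ioo.intermediate_value hx hm
    (continuousOn_const.mul hf : ContinuousOn (fun x ↦ f m * f x) _) ⟨hneg, mul_self_nonneg _⟩
  exact mul_ne_zero (hne m hm) (hne y hy) hzero

lemma exists_consecutive_zeros {f : ℝ → ℝ} {a b m : ℝ} (hf : ContinuousOn f (Icc a b))
    (ha : f a = 0) (hb : f b = 0) (hm : m ∈ Icc a b) (hne : f m ≠ 0) :
    ∃ c d, a ≤ c ∧ c < d ∧ d ≤ b ∧ f c = 0 ∧ f d = 0 ∧ ∀ x ∈ Ioo c d, f x ≠ 0 := by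
  have hcompact : ∀ c d, a ≤ c → d ≤ b → IsCompact (Icc c d ∩ f ⁻¹' {0}) := fun c d hc hd ↦
    isCompact_Icc.of_isClosed_subset ((hf.mono (Icc_subset_Icc hc hd)).preimage_isClosed_of_isClosed
      isClosed_Icc isClosed_singleton) inter_subset_left
  obtain ⟨c, ⟨hc, hc0⟩, hmax⟩ := (hcompact a m le_rfl hm.2).exists_isGreatest
    ⟨a, left_mem_Icc.2 hm.1, ha⟩
  obtain ⟨d, ⟨hd, hd0⟩, hmin⟩ := (hcompact m b hm.1 le_rfl).exists_isLeast
    ⟨b, right_mem_Icc.2 hm.2, hb⟩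
  have hcm : c < m := hc.2.lt_of_ne fun h ↦ hne (h ▸ hc0)
  refine ⟨c, d, hc.1, hcm.trans_le hd.1, hd.2, hc0, hd0, fun x hx hx0 ↦ ?_⟩
  rcases le_total x m with hxm | hmx
  · exact (hmax ⟨⟨hc.1.trans hx.1.le, hxm⟩, hx0⟩).not_gt hx.1
  · exact (hmin ⟨⟨hmx, hx.2.le.trans hd.2⟩, hx0⟩).not_gt hx.2

lemma SturmLiouvilleOn.exists_zero {p q₁ q₂ y₁ y₂ z₁ z₂ : ℝ → ℝ} {a b : ℝ}
    (h₁ : SturmLiouvilleOn p q₁ y₁ z₁ a b) (h₂ : SturmLiouvilleOn p q₂ y₂ z₂ a b)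
    (hp : ∀ x ∈ Ioo a b, 0 < p x) (hq : ∀ x ∈ Ioo a b, q₁ x < q₂ x) (ha : y₂ a = 0)
    (hb : y₂ b = 0) (hne : ∃ m ∈ Icc a b, y₂ m ≠ 0) : ∃ w ∈ Ioo a b, y₁ w = 0 := by
  by_contra! hy₁
  obtain ⟨m, hm, hm0⟩ := hne
  obtain ⟨c, d, hac, hcd, hdb, hc, hd, hy₂⟩ := exists_consecutive_zeros h₂.continuousOn ha hb hm hm0
  have hsub : Ioo c d ⊆ Ioo a b := Ioo_subset_Ioo hac hdb
  have hsubIcc : Ioo c d ⊆ Icc a b := hsub.trans Ioo_subset_Icc_self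
  obtain ⟨s₁, hs₁⟩ := exists_forall_mul_pos_of_ne_zero (h₁.continuousOn.mono hsubIcc)
    fun x hx ↦ hy₁ x (hsub hx)
  obtain ⟨s₂, hs₂⟩ := exists_forall_mul_pos_of_ne_zero (h₂.continuousOn.mono hsubIcc) hy₂
  exact ((h₁.mono hac hdb).const_mul s₁).not_forall_pos ((h₂.mono hac hdb).const_mul s₂)
    (fun x hx ↦ hp x (hsub hx)) (fun x hx ↦ hq x (hsub hx)) hcd (by simp [hc]) (by simp [hd])
    hs₂ hs₁

end Sturm

/-! ### Interlacing of zeros -/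

section Interlacing

variable {μ ν a b : ℝ}

lemma exists_besselJ_eq_zero_of_succ (hν : -1 < ν) (ha : 0 ≤ a) (hab : a < b)
    (hJa : besselJ (ν + 1) a = 0) (hJb : besselJ (ν + 1) b = 0) :
    ∃ w ∈ Ioo a b, besselJ ν w = 0 := by
  have hcont : ContinuousOn (fun x ↦ x ^ (ν + 1) * besselJ (ν + 1) x) (Icc a b) :=
    (continuous_rpow_const (by linarith)).continuousOn.mul
      ((continuousOn_besselJ (by linarith)).mono fun x hx ↦ ha.trans hx.1)
  obtain ⟨w, hw, hderiv⟩ := exists_hasDerivAt_eq_zero hab hcont (by simp [hJa, hJb])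
    (f' := fun x ↦ x ^ (ν + 1) * besselJ ν x) fun x hx ↦ by
      have hx0 : 0 < x := ha.trans_lt hx.1
      refine ((hasDerivAt_rpow_const (.inl hx0.ne')).mul
        (hasDerivAt_besselJ_succ ν hx0)).congr_deriv ?_
      rw [rpow_sub_one hx0.ne']
      field_simp
      ring
  exact ⟨w, hw, (mul_eq_zero_iff_left (rpow_pos_of_pos (ha.trans_lt hw.1) _).ne').1 hderiv⟩

lemma exists_besselJ_succ_eq_zero (ha : 0 < a) (hab : a < b) (hJa : besselJ ν a = 0)
    (hJb : besselJ ν b = 0) : ∃ w ∈ Ioo a b, besselJ (ν + 1) w = 0 := by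
  have hderiv : ∀ x, 0 < x → HasDerivAt (fun x ↦ x ^ (-ν) * besselJ ν x)
      (x ^ (-ν) * -besselJ (ν + 1) x) x := fun x hx ↦ by
    refine ((hasDerivAt_rpow_const (.inl hx.ne')).mul
      (hasDerivAt_besselJ_of_succ ν hx)).congr_deriv ?_
    rw [rpow_sub_one hx.ne']
    field_simp
    ring
  obtain ⟨w, hw, hzero⟩ := exists_hasDerivAt_eq_zero hab
    (fun x hx ↦ (hderiv x (ha.trans_le hx.1)).continuousAt.continuousWithinAt)
    (by simp [hJa, hJb]) fun x hx ↦ hderiv x (ha.trans hx.1)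
  have hpow := (rpow_pos_of_pos (ha.trans hw.1) (-ν)).ne'
  exact ⟨w, hw, neg_eq_zero.1 ((mul_eq_zero_iff_left hpow).1 hzero)⟩

lemma exists_besselJ_ne_zero (ν : ℝ) (ha : 0 ≤ a) (hab : a < b) :
    ∃ m ∈ Icc a b, besselJ ν m ≠ 0 := by
  by_contra! hzero
  obtain ⟨c, hac, hcb⟩ := exists_between hab
  obtain ⟨w, hw, hJw⟩ := exists_besselJ_succ_eq_zero (ha.trans_lt hac) hcb
    (hzero c ⟨hac.le, hcb.le⟩) (hzero b (right_mem_Icc.2 hab.le))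
  exact besselJ_succ_ne_zero ((ha.trans_lt hac).trans hw.1)
    (hzero w ⟨(hac.trans hw.1).le, hw.2.le⟩) hJw

/-- The flux `x J_ν'(x)` of `J_ν`, written so that it is continuous at `0`. -/
noncomputable def besselFlux (ν x : ℝ) : ℝ := ν * besselJ ν x - x * besselJ (ν + 1) x

lemma sturmLiouvilleOn_besselJ (hν : 0 < ν) (ha : 0 ≤ a) :
    SturmLiouvilleOn id (fun x ↦ (ν ^ 2 - x ^ 2) / x) (besselJ ν) (besselFlux ν) a b := by
  have hsub : Icc a b ⊆ Ici 0 := fun x hx ↦ ha.trans hx.1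
  have hJ := (continuousOn_besselJ hν).mono hsub
  have hJ' := (continuousOn_besselJ (by linarith : 0 < ν + 1)).mono hsub
  refine ⟨hJ, (continuousOn_const.mul hJ).sub (continuousOn_id.mul hJ'), fun x hx ↦ ?_,
    fun x hx ↦ ?_⟩ <;> have hx0 : 0 < x := ha.trans_lt hx.1
  · refine (hasDerivAt_besselJ_of_succ ν hx0).congr_deriv ?_
    rw [besselFlux, id]
    field_simp
  · refine (((hasDerivAt_besselJ_of_succ ν hx0).const_mul ν).sub
      ((hasDerivAt_id x).mul (hasDerivAt_besselJ_succ ν hx0))).congr_deriv ?_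
    rw [id]
    field_simp
    ring

lemma exists_besselJ_eq_zero_of_lt (hμ : 0 < μ) (hμν : μ < ν) (ha : 0 ≤ a) (hab : a < b)
    (hJa : besselJ ν a = 0) (hJb : besselJ ν b = 0) : ∃ w ∈ Ioo a b, besselJ μ w = 0 := by
  refine (sturmLiouvilleOn_besselJ hμ ha).exists_zero (sturmLiouvilleOn_besselJ (hμ.trans hμν) ha)
    (fun x hx ↦ ha.trans_lt hx.1) (fun x hx ↦ ?_) hJa hJb (exists_besselJ_ne_zero ν ha hab)
  have hx0 : 0 < x := ha.trans_lt hx.1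
  gcongr

end Interlacing

/-! ### Counting zeros -/

section Counting

variable {μ ν X : ℝ}

lemma finite_and_ncard_le_of_separated {α : Type*} [LinearOrder α] {S T : Set α} (hT : T.Finite)
    (hbelow : ∀ z ∈ S, ∃ w ∈ T, w < z)
    (hbetween : ∀ z ∈ S, ∀ z' ∈ S, z < z' → ∃ w ∈ T, z ≤ w ∧ w < z') :
    S.Finite ∧ S.ncard ≤ T.ncard := by
  set rank : α → ℕ := fun z ↦ (T ∩ Iio z).ncard
  have hmaps : MapsTo rank S (Icc 1 T.ncard) := fun z hz ↦
    ⟨(ncard_pos (hT.inter_of_left _)).2 (hbelow z hz), ncard_le_ncard inter_subset_left hT⟩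
  have hmono : StrictMonoOn rank S := fun z hz z' hz' hlt ↦ by
    obtain ⟨w, hw, hzw, hwz'⟩ := hbetween z hz z' hz' hlt
    exact ncard_lt_ncard ⟨inter_subset_inter_right _ (Iio_subset_Iio hlt.le),
      fun h ↦ (h ⟨hw, hwz'⟩).2.not_ge hzw⟩ (hT.inter_of_left _)
  refine ⟨.of_injOn hmaps hmono.injOn (finite_Icc _ _), ?_⟩
  simpa [ncard_eq_toFinset_card'] using
    ncard_le_ncard_of_injOn rank hmaps hmono.injOn (finite_Icc _ _)

/-- The zeros of `J_ν` in `(0, X)`. -/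
def besselZerosLT (ν X : ℝ) : Set ℝ := {x | 0 < x ∧ x < X ∧ besselJ ν x = 0}

/-- The zeros of `J_ν` in `(0, X]`. -/
def besselZerosLE (ν X : ℝ) : Set ℝ := {x | 0 < x ∧ x ≤ X ∧ besselJ ν x = 0}

lemma besselZerosLT_subset_besselZerosLE (ν X : ℝ) : besselZerosLT ν X ⊆ besselZerosLE ν X :=
  fun _ hx ↦ ⟨hx.1, hx.2.1.le, hx.2.2⟩

lemma besselZerosLT_subset {Y : ℝ} (hXY : X ≤ Y) : besselZerosLT ν X ⊆ besselZerosLT ν Y :=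
  fun _ hx ↦ ⟨hx.1, hx.2.1.trans_le hXY, hx.2.2⟩

lemma besselZerosLE_finite_and_ncard_le_of_interlaced (hν : 0 < ν)
    (hinterlaced : ∀ a b, 0 ≤ a → a < b → besselJ ν a = 0 → besselJ ν b = 0 →
      ∃ w ∈ Ioo a b, besselJ μ w = 0) (hfin : (besselZerosLT μ X).Finite) :
    (besselZerosLE ν X).Finite ∧ (besselZerosLE ν X).ncard ≤ (besselZerosLT μ X).ncard := by
  refine finite_and_ncard_le_of_separated hfin ?_ ?_
  · rintro z ⟨hz, hzX, hJz⟩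
    obtain ⟨w, hw, hJw⟩ := hinterlaced 0 z le_rfl hz (besselJ_apply_zero hν) hJz
    exact ⟨w, ⟨hw.1, hw.2.trans_le hzX, hJw⟩, hw.2⟩
  · rintro z ⟨hz, -, hJz⟩ z' ⟨-, hzX', hJz'⟩ hzz'
    obtain ⟨w, hw, hJw⟩ := hinterlaced z z' hz.le hzz' hJz hJz'
    exact ⟨w, ⟨hz.trans hw.1, hw.2.trans_le hzX', hJw⟩, hw.1.le, hw.2⟩

lemma besselZerosLE_finite_and_ncard_le_succ (hfin : (besselZerosLT (ν + 1) X).Finite) :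
    (besselZerosLE ν X).Finite ∧
      (besselZerosLE ν X).ncard ≤ (besselZerosLT (ν + 1) X).ncard + 1 := by
  have hcount := finite_and_ncard_le_of_separated (S := besselZerosLE ν X) (hfin.insert 0)
    (fun z hz ↦ ⟨0, mem_insert _ _, hz.1⟩) ?_
  · exact ⟨hcount.1, hcount.2.trans (ncard_insert_le _ _)⟩
  · rintro z ⟨hz, -, hJz⟩ z' ⟨-, hzX', hJz'⟩ hzz'
    obtain ⟨w, hw, hJw⟩ := exists_besselJ_succ_eq_zero hz hzz' hJz hJz'
    exact ⟨w, mem_insert_of_mem _ ⟨hz.trans hw.1, hw.2.trans_le hzX', hJw⟩, hw.1.le, hw.2⟩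

lemma besselJ_half_eq_zero_iff_exists_nat {x : ℝ} (hx : 0 < x) :
    besselJ (1 / 2) x = 0 ↔ ∃ n : ℕ, (n + 1) * π = x := by
  rw [besselJ_half_eq_zero_iff hx, sin_eq_zero_iff]
  constructor
  · rintro ⟨n, rfl⟩
    have hn : 0 < n := by exact_mod_cast pos_of_mul_pos_left hx pi_pos.le
    obtain ⟨p, rfl⟩ := Int.eq_succ_of_zero_lt hn
    exact ⟨p, by push_cast; rfl⟩
  · rintro ⟨n, rfl⟩
    exact ⟨n + 1, by push_cast; rfl⟩

lemma besselZerosLT_half (p : ℕ) :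
    besselZerosLT (1 / 2) ((p + 1) * π) = (fun n : ℕ ↦ (n + 1) * π) '' Iio p := by
  have hlt : ∀ n : ℕ, (n + 1) * π < (p + 1) * π ↔ n < p := fun n ↦ by
    rw [mul_lt_mul_iff_left₀ pi_pos, add_lt_add_iff_right, Nat.cast_lt]
  ext x
  constructor
  · rintro ⟨hx, hxp, hJ⟩
    obtain ⟨n, rfl⟩ := (besselJ_half_eq_zero_iff_exists_nat hx).1 hJ
    exact ⟨n, (hlt n).1 hxp, rfl⟩
  · rintro ⟨n, hn, rfl⟩
    have hpos : 0 < (n + 1) * π := by positivity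
    exact ⟨hpos, (hlt n).2 hn, (besselJ_half_eq_zero_iff_exists_nat hpos).2 ⟨n, rfl⟩⟩

lemma ncard_besselZerosLT_half (p : ℕ) : (besselZerosLT (1 / 2) ((p + 1) * π)).ncard = p := by
  have hinj : Function.Injective fun n : ℕ ↦ (n + 1) * π := fun m n h ↦ by
    simpa [pi_ne_zero] using h
  rw [besselZerosLT_half, ncard_image_of_injective _ hinj, ← Finset.coe_Iio, ncard_coe_finset,
    Nat.card_Iio]

lemma besselZerosLT_half_subset (X : ℝ) :
    besselZerosLT (1 / 2) X ⊆ besselZerosLT (1 / 2) ((⌊X / π⌋₊ + 1) * π) :=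
  besselZerosLT_subset ((div_le_iff₀ pi_pos).1 (Nat.lt_floor_add_one _).le)

lemma besselZerosLT_half_finite (X : ℝ) : (besselZerosLT (1 / 2) X).Finite := by
  refine .subset ?_ (besselZerosLT_half_subset X)
  rw [besselZerosLT_half]
  exact (finite_Iio _).image _

lemma ncard_besselZerosLT_half_le (hX : 0 ≤ X) :
    ((besselZerosLT (1 / 2) X).ncard : ℝ) ≤ X / π := by
  refine le_trans ?_ (Nat.floor_le (by positivity))
  rw [Nat.cast_le, ← ncard_besselZerosLT_half ⌊X / π⌋₊]
  exact ncard_le_ncard (besselZerosLT_half_subset X) (besselZerosLT_half_finite _)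

lemma besselZerosLE_finite (hν : 0 ≤ ν) (X : ℝ) : (besselZerosLE ν X).Finite := by
  refine (besselZerosLE_finite_and_ncard_le_succ (.subset ?_
    (besselZerosLT_subset_besselZerosLE _ _))).1
  exact (besselZerosLE_finite_and_ncard_le_of_interlaced (by linarith)
    (fun _ _ ↦ exists_besselJ_eq_zero_of_lt one_half_pos (by linarith))
    (besselZerosLT_half_finite X)).1

lemma besselZerosLT_finite (hν : 0 ≤ ν) (X : ℝ) : (besselZerosLT ν X).Finite :=
  (besselZerosLE_finite hν X).subset (besselZerosLT_subset_besselZerosLE _ _)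

lemma ncard_besselZerosLT_mono {Y : ℝ} (hν : 0 ≤ ν) (hXY : X ≤ Y) :
    (besselZerosLT ν X).ncard ≤ (besselZerosLT ν Y).ncard :=
  ncard_le_ncard (besselZerosLT_subset hXY) (besselZerosLT_finite hν Y)

lemma ncard_besselZerosLE_of_zero {j : ℝ} (hν : 0 ≤ ν) (hj : 0 < j) (hJ : besselJ ν j = 0) :
    (besselZerosLE ν j).ncard = (besselZerosLT ν j).ncard + 1 := by
  have hinsert : besselZerosLE ν j = insert j (besselZerosLT ν j) := by
    ext x
    constructor
    · rintro ⟨hx, hxj, hJx⟩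
      exact hxj.eq_or_lt.imp_right fun h ↦ ⟨hx, h, hJx⟩
    · rintro (rfl | hx)
      · exact ⟨hj, le_rfl, hJ⟩
      · exact besselZerosLT_subset_besselZerosLE _ _ hx
  rw [hinsert, ncard_insert_of_notMem (fun h ↦ h.2.1.false) (besselZerosLT_finite hν j)]

lemma ncard_besselZerosLE_succ_le (hν : 0 ≤ ν) (X : ℝ) :
    (besselZerosLE (ν + 1) X).ncard ≤ (besselZerosLT ν X).ncard :=
  (besselZerosLE_finite_and_ncard_le_of_interlaced (by linarith)
    (fun _ _ ↦ exists_besselJ_eq_zero_of_succ (by linarith)) (besselZerosLT_finite hν X)).2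

lemma ncard_besselZerosLE_le_of_lt (hμ : 0 < μ) (hμν : μ < ν) (X : ℝ) :
    (besselZerosLE ν X).ncard ≤ (besselZerosLT μ X).ncard :=
  (besselZerosLE_finite_and_ncard_le_of_interlaced (hμ.trans hμν)
    (fun _ _ ↦ exists_besselJ_eq_zero_of_lt hμ hμν) (besselZerosLT_finite hμ.le X)).2

lemma ncard_besselZerosLE_le_succ (hν : 0 ≤ ν) (X : ℝ) :
    (besselZerosLE ν X).ncard ≤ (besselZerosLT (ν + 1) X).ncard + 1 :=
  (besselZerosLE_finite_and_ncard_le_succ (besselZerosLT_finite (by linarith) X)).2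

lemma ncard_besselZerosLT_le (hν : 0 ≤ ν) (hX : 0 ≤ X) :
    ((besselZerosLT ν X).ncard : ℝ) ≤ X / π + 1 := by
  have hν' : 0 ≤ ν + 1 := by linarith
  have hcount : (besselZerosLT ν X).ncard ≤ (besselZerosLT (1 / 2) X).ncard + 1 := calc
    (besselZerosLT ν X).ncard ≤ (besselZerosLE ν X).ncard :=
        ncard_le_ncard (besselZerosLT_subset_besselZerosLE _ _) (besselZerosLE_finite hν X)
    _ ≤ (besselZerosLT (ν + 1) X).ncard + 1 := ncard_besselZerosLE_le_succ hν X
    _ ≤ (besselZerosLE (ν + 1) X).ncard + 1 := by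
        gcongr
        · exact besselZerosLE_finite hν' X
        · exact besselZerosLT_subset_besselZerosLE _ _
    _ ≤ (besselZerosLT (1 / 2) X).ncard + 1 :=
        Nat.add_le_add_right (ncard_besselZerosLE_le_of_lt one_half_pos (by linarith) X) 1
  calc ((besselZerosLT ν X).ncard : ℝ) ≤ (besselZerosLT (1 / 2) X).ncard + 1 := mod_cast hcount
    _ ≤ X / π + 1 := by gcongr; exact ncard_besselZerosLT_half_le hX

end Counting

/-! ### Numbering the zeros -/

section Numbering

variable {μ ν X Y : ℝ} {m : ℤ}

/-- Every McMahon point of `J_ν` beyond `X` has a zero of `J_ν` within `1/2`. -/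
def HasZerosNearMcMahonPoints (ν X : ℝ) : Prop :=
  ∀ m, X ≤ mcMahonPoint ν m - 1 / 2 → ∃ j, besselJ ν j = 0 ∧ |j - mcMahonPoint ν m| ≤ 1 / 2

/-- A zero of `J_ν` beyond `X` and within `1/2` of the `m`-th McMahon point is the `m`-th positive
zero of `J_ν`. -/
def ZerosNumberedByMcMahonPoints (ν X : ℝ) : Prop :=
  ∀ j, X ≤ j → besselJ ν j = 0 → ∀ m, |j - mcMahonPoint ν m| ≤ 1 / 2 →
    ((besselZerosLT ν j).ncard : ℤ) + 1 = m

lemma HasZerosNearMcMahonPoints.mono (h : HasZerosNearMcMahonPoints ν X) (hXY : X ≤ Y) :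
    HasZerosNearMcMahonPoints ν Y := fun m hm ↦ h m (hXY.trans hm)

lemma ZerosNumberedByMcMahonPoints.mono (h : ZerosNumberedByMcMahonPoints ν X) (hXY : X ≤ Y) :
    ZerosNumberedByMcMahonPoints ν Y := fun j hj ↦ h j (hXY.trans hj)

lemma mcMahonPoint_order_succ (ν : ℝ) (m : ℤ) :
    mcMahonPoint (ν + 1) m = mcMahonPoint ν m + π / 2 := by
  unfold mcMahonPoint
  ring

lemma mcMahonPoint_index_succ (ν : ℝ) (m : ℤ) :
    mcMahonPoint ν (m + 1) = mcMahonPoint ν m + π := by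
  unfold mcMahonPoint
  push_cast
  ring

lemma mcMahonPoint_index_pred (ν : ℝ) (m : ℤ) :
    mcMahonPoint ν (m - 1) = mcMahonPoint ν m - π := by
  rw [eq_sub_iff_add_eq, ← mcMahonPoint_index_succ, sub_add_cancel]

lemma strictMono_mcMahonPoint_order (m : ℤ) : StrictMono fun ν ↦ mcMahonPoint ν m :=
  fun μ ν hμν ↦ mul_lt_mul_of_pos_left (by linarith) pi_pos

lemma exists_zero_ncard_eq (hν : 0 ≤ ν) (hX : 0 < X) (hzeros : HasZerosNearMcMahonPoints ν X)
    (hnum : ZerosNumberedByMcMahonPoints ν X) (hm : X ≤ mcMahonPoint ν m - 1 / 2) :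
    ∃ j, |j - mcMahonPoint ν m| ≤ 1 / 2 ∧ ((besselZerosLT ν j).ncard : ℤ) + 1 = m ∧
      ((besselZerosLE ν j).ncard : ℤ) = m := by
  obtain ⟨j, hJ, hj⟩ := hzeros m hm
  have hXj : X ≤ j := by linarith [(abs_le.1 hj).1]
  have hcount := hnum j hXj hJ m hj
  refine ⟨j, hj, hcount, ?_⟩
  rw [ncard_besselZerosLE_of_zero hν (hX.trans_le hXj) hJ]
  exact_mod_cast hcount

lemma zerosNumberedByMcMahonPoints_half : ZerosNumberedByMcMahonPoints (1 / 2) 1 := by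
  intro j hj hJ m hm
  obtain ⟨p, rfl⟩ := (besselJ_half_eq_zero_iff_exists_nat (by linarith)).1 hJ
  have hdist : (p + 1) * π - mcMahonPoint (1 / 2) m = ((p + 1 - m : ℤ) : ℝ) * π := by
    unfold mcMahonPoint
    push_cast
    ring
  rw [hdist, abs_mul, abs_of_pos pi_pos] at hm
  have hlt : |((p + 1 - m : ℤ) : ℝ)| < 1 := by
    by_contra! hge
    linarith [mul_le_mul_of_nonneg_right hge pi_pos.le, pi_gt_three]
  have heq : |(p + 1 - m : ℤ)| < 1 := mod_cast hlt
  rw [ncard_besselZerosLT_half]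
  exact sub_eq_zero.1 (Int.abs_lt_one_iff.1 heq)

lemma ZerosNumberedByMcMahonPoints.succ (hnum : ZerosNumberedByMcMahonPoints ν X) (hν : 0 ≤ ν)
    (hX : 0 < X) (hzeros : HasZerosNearMcMahonPoints ν X) :
    ZerosNumberedByMcMahonPoints (ν + 1) (X + 5) := by
  intro j hj hJ m hm
  have hpi := pi_lt_four
  have hpi' := pi_gt_three
  have hm' := abs_le.1 hm
  rw [mcMahonPoint_order_succ] at hm'
  obtain ⟨k, hk, -, hkcount⟩ := exists_zero_ncard_eq hν hX hzeros hnum (m := m) (by linarith)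
  obtain ⟨l, hl, hlcount, -⟩ := exists_zero_ncard_eq hν hX hzeros hnum (m := m + 1)
    (by rw [mcMahonPoint_index_succ]; linarith)
  rw [mcMahonPoint_index_succ] at hl
  have hkj : k ≤ j := by linarith [(abs_le.1 hk).2]
  have hjl : j ≤ l := by linarith [(abs_le.1 hl).1]
  have hupper := (ncard_besselZerosLE_succ_le hν j).trans (ncard_besselZerosLT_mono hν hjl)
  rw [ncard_besselZerosLE_of_zero (by linarith) (by linarith) hJ] at hupper
  have hlower := (ncard_besselZerosLE_le_succ hν k).trans
    (Nat.add_le_add_right (ncard_besselZerosLT_mono (by linarith) hkj) 1)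
  omega

lemma ZerosNumberedByMcMahonPoints.of_succ (hnum : ZerosNumberedByMcMahonPoints (ν + 1) X)
    (hν : 0 ≤ ν) (hX : 0 < X) (hzeros : HasZerosNearMcMahonPoints (ν + 1) X) :
    ZerosNumberedByMcMahonPoints ν (X + 5) := by
  intro j hj hJ m hm
  have hpi := pi_lt_four
  have hpi' := pi_gt_three
  have hm' := abs_le.1 hm
  have hν' : 0 ≤ ν + 1 := by linarith
  obtain ⟨k, hk, -, hkcount⟩ := exists_zero_ncard_eq hν' hX hzeros hnum (m := m - 1)
    (by rw [mcMahonPoint_index_pred, mcMahonPoint_order_succ]; linarith)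
  obtain ⟨l, hl, hlcount, -⟩ := exists_zero_ncard_eq hν' hX hzeros hnum (m := m)
    (by rw [mcMahonPoint_order_succ]; linarith)
  rw [mcMahonPoint_index_pred, mcMahonPoint_order_succ] at hk
  rw [mcMahonPoint_order_succ] at hl
  have hkj : k ≤ j := by linarith [(abs_le.1 hk).2]
  have hjl : j ≤ l := by linarith [(abs_le.1 hl).1]
  have hlower := (ncard_besselZerosLE_succ_le hν k).trans (ncard_besselZerosLT_mono hν hkj)
  have hupper := (ncard_besselZerosLE_le_succ hν j).trans
    (Nat.add_le_add_right (ncard_besselZerosLT_mono hν' hjl) 1)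
  rw [ncard_besselZerosLE_of_zero hν (by linarith) hJ] at hupper
  omega

lemma ZerosNumberedByMcMahonPoints.of_between (hnum : ZerosNumberedByMcMahonPoints μ X)
    (hnum' : ZerosNumberedByMcMahonPoints (μ + 1) X) (hμ : 0 < μ) (hμν : μ < ν) (hνμ : ν < μ + 1)
    (hX : 0 < X) (hzeros : HasZerosNearMcMahonPoints μ X)
    (hzeros' : HasZerosNearMcMahonPoints (μ + 1) X) :
    ZerosNumberedByMcMahonPoints ν (X + 5) := by
  intro j hj hJ m hm
  have hpi := pi_lt_four
  have hpi' := pi_gt_three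
  have hm' := abs_le.1 hm
  have hν : 0 < ν := hμ.trans hμν
  have hpoint : mcMahonPoint μ m < mcMahonPoint ν m := strictMono_mcMahonPoint_order m hμν
  have hpoint' : mcMahonPoint ν m < mcMahonPoint (μ + 1) m := strictMono_mcMahonPoint_order m hνμ
  rw [mcMahonPoint_order_succ] at hpoint'
  obtain ⟨k, hk, -, hkcount⟩ := exists_zero_ncard_eq (by linarith) hX hzeros' hnum' (m := m - 1)
    (by rw [mcMahonPoint_index_pred, mcMahonPoint_order_succ]; linarith)
  obtain ⟨l, hl, hlcount, -⟩ := exists_zero_ncard_eq hμ.le hX hzeros hnum (m := m + 1)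
    (by rw [mcMahonPoint_index_succ]; linarith)
  rw [mcMahonPoint_index_pred, mcMahonPoint_order_succ] at hk
  rw [mcMahonPoint_index_succ] at hl
  have hkj : k ≤ j := by linarith [(abs_le.1 hk).2]
  have hjl : j ≤ l := by linarith [(abs_le.1 hl).1]
  have hlower := (ncard_besselZerosLE_le_of_lt hν hνμ k).trans (ncard_besselZerosLT_mono hν.le hkj)
  have hupper := (ncard_besselZerosLE_le_of_lt hμ hμν j).trans (ncard_besselZerosLT_mono hμ.le hjl)
  rw [ncard_besselZerosLE_of_zero hν.le (by linarith) hJ] at hupper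
  omega

lemma zerosNumberedByMcMahonPoints_half_add (hX : 1 ≤ X) (n : ℕ)
    (hzeros : ∀ i < n, HasZerosNearMcMahonPoints (1 / 2 + i) X) :
    ZerosNumberedByMcMahonPoints (1 / 2 + n) (X + 5 * n) := by
  induction n with
  | zero => simpa using zerosNumberedByMcMahonPoints_half.mono hX
  | succ n ih =>
    have hstep := (ih fun i hi ↦ hzeros i (hi.trans n.lt_succ_self)).succ (by positivity)
      (by positivity) ((hzeros n n.lt_succ_self).mono (by linarith [n.cast_nonneg (α := ℝ)]))
    convert hstep using 1 <;> push_cast <;> ring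

lemma zerosNumberedByMcMahonPoints_of_half_le {N : ℝ} (hX : 1 ≤ X)
    (hzeros : ∀ μ, 0 ≤ μ → μ ≤ N + 1 → HasZerosNearMcMahonPoints μ X) (hν : 1 / 2 ≤ ν)
    (hνN : ν ≤ N) : ZerosNumberedByMcMahonPoints ν (X + 5 * (N + 1) + 5) := by
  set n := ⌊ν - 1 / 2⌋₊
  have hn : n ≤ ν - 1 / 2 := Nat.floor_le (by linarith)
  have hn' : ν - 1 / 2 < n + 1 := Nat.lt_floor_add_one _
  have hhalf : ∀ i : ℕ, (i : ℝ) ≤ n + 1 →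
      ZerosNumberedByMcMahonPoints (1 / 2 + i) (X + 5 * (N + 1)) := fun i hi ↦ by
    refine (zerosNumberedByMcMahonPoints_half_add hX i fun l hl ↦ ?_).mono (by linarith)
    have hli : (l : ℝ) < i := mod_cast hl
    exact hzeros _ (by positivity) (by linarith)
  rcases eq_or_lt_of_le (by linarith : 1 / 2 + n ≤ ν) with hμν | hμν
  · exact hμν ▸ (hhalf n (by linarith)).mono (by linarith)
  · refine (hhalf n (by linarith)).of_between ?_ (by positivity) hμν (by linarith) (by linarith)
      ((hzeros _ (by positivity) (by linarith)).mono (by linarith))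
      ((hzeros _ (by positivity) (by linarith)).mono (by linarith))
    simpa [add_assoc] using hhalf (n + 1) (by push_cast; rfl)

lemma exists_zerosNumberedByMcMahonPoints (N : ℝ) :
    ∃ X, 1 ≤ X ∧ ∀ ν, 0 ≤ ν → ν ≤ N → ZerosNumberedByMcMahonPoints ν X := by
  obtain ⟨X, hX, hzeros⟩ := exists_zero_near_mcMahonPoint (|N| + 2)
  have hzeros' : ∀ ν, 0 ≤ ν → ν ≤ |N| + 1 + 1 → HasZerosNearMcMahonPoints ν X :=
    fun ν hν hνN ↦ hzeros ν hν (by linarith)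
  have hN := abs_nonneg N
  have hNN := le_abs_self N
  refine ⟨X + 5 * (|N| + 1 + 1) + 5 + 5, by linarith, fun ν hν hνN ↦ ?_⟩
  rcases le_or_gt (1 / 2) ν with hhalf | _
  · exact (zerosNumberedByMcMahonPoints_of_half_le hX hzeros' hhalf (by linarith)).mono
      (by linarith)
  · exact (zerosNumberedByMcMahonPoints_of_half_le hX hzeros' (by linarith)
      (by linarith)).of_succ hν (by linarith)
      ((hzeros' (ν + 1) (by linarith) (by linarith)).mono (by linarith))

end Numbering

/-! ### The function `g` and the conclusion -/

section Minkowski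

variable {ν t x : ℝ}

lemma abs_one_sub_pi_mul_gfun_le (ht₀ : 0 ≤ t) (ht₁ : t ≤ 1) :
    |1 - (π * gfun t + π * t / 2)| ≤ 3 * t ^ 2 := by
  have hsplit : 1 - (π * gfun t + π * t / 2) = (1 - √(1 - t ^ 2)) - t * arcsin t := by
    rw [gfun, mul_div_cancel₀ _ pi_ne_zero, arccos_eq_pi_div_two_sub_arcsin]
    ring
  have ht_sq : t ^ 2 ≤ 1 := pow_le_one₀ ht₀ ht₁
  have hsqrt_le : √(1 - t ^ 2) ≤ 1 := sqrt_le_one.2 (by linarith [sq_nonneg t])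
  have hle_sqrt : 1 - t ^ 2 ≤ √(1 - t ^ 2) :=
    le_sqrt_of_sq_le (pow_le_of_le_one (by linarith) (by linarith [sq_nonneg t]) two_ne_zero)
  have harcsin : 0 ≤ arcsin t := arcsin_nonneg.2 ht₀
  have harcsin_le : arcsin t ≤ π / 2 * t := by
    have := mul_le_sin harcsin (arcsin_le_pi_div_two t)
    rwa [sin_arcsin (by linarith) ht₁, ← inv_div π 2, inv_mul_le_iff₀ (by positivity)] at this
  have hmul_le : t * arcsin t ≤ 2 * t ^ 2 := calc
    t * arcsin t ≤ t * (π / 2 * t) := by gcongr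
    _ = π / 2 * t ^ 2 := by ring
    _ ≤ 2 * t ^ 2 := by gcongr; linarith [pi_lt_four]
  rw [hsplit, abs_le]
  constructor <;> linarith [mul_nonneg ht₀ harcsin, sq_nonneg t]

lemma gfun_le_one (ht₀ : 0 ≤ t) : gfun t ≤ 1 := by
  have hsqrt : √(1 - t ^ 2) ≤ 1 := sqrt_le_one.2 (by linarith [sq_nonneg t])
  refine div_le_one_of_le₀ ?_ pi_pos.le
  linarith [mul_nonneg ht₀ (arccos_nonneg t), pi_gt_three]

lemma le_of_mul_gfun_eq {q : ℝ} (hν : 0 ≤ ν) (hνx : ν ≤ x) (hx : x * gfun (ν / x) = q) : q ≤ x :=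
  hx ▸ mul_le_of_le_one_right (hν.trans hνx) (gfun_le_one (div_nonneg hν (hν.trans hνx)))

lemma abs_sub_pi_mul_add_le {q : ℝ} (hν : 0 ≤ ν) (hνx : ν ≤ x) (hx₀ : 0 < x)
    (hx : x * gfun (ν / x) = q) : |x - π * (q + ν / 2)| ≤ 3 * ν ^ 2 / x := by
  have hscale : x - π * (q + ν / 2) = x * (1 - (π * gfun (ν / x) + π * (ν / x) / 2)) := by
    rw [← hx]
    field_simp
  rw [hscale, abs_mul, abs_of_pos hx₀]
  calc x * |1 - (π * gfun (ν / x) + π * (ν / x) / 2)| ≤ x * (3 * (ν / x) ^ 2) := by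
        gcongr
        exact abs_one_sub_pi_mul_gfun_le (by positivity) ((div_le_one hx₀).2 hνx)
    _ = 3 * ν ^ 2 / x := by field_simp

lemma abs_sub_mcMahonPoint_le_of_mul_gfun_eq {N : ℝ} {k : ℕ} (hν : 0 ≤ ν) (hνN : ν ≤ N)
    (hk : 1 ≤ k) (hνx : ν ≤ x) (hx : x * gfun (ν / x) = k - 1 / 4) :
    |x - mcMahonPoint ν k| ≤ 6 * N ^ 2 / k := by
  have hk' : (1 : ℝ) ≤ k := mod_cast hk
  have hkx : (k : ℝ) / 2 ≤ x := by linarith [le_of_mul_gfun_eq hν hνx hx]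
  have hpoint : mcMahonPoint ν k = π * (k - 1 / 4 + ν / 2) := by
    unfold mcMahonPoint
    push_cast
    ring
  rw [hpoint]
  calc |x - π * (k - 1 / 4 + ν / 2)| ≤ 3 * ν ^ 2 / x :=
        abs_sub_pi_mul_add_le hν hνx (by linarith) hx
    _ ≤ 3 * N ^ 2 / (k / 2) := by gcongr
    _ = 6 * N ^ 2 / k := by ring

lemma le_of_isKthZero {k : ℕ} {j : ℝ} (hν : 0 ≤ ν) (hk : 3 ≤ k) (hj : IsKthZero ν k j) :
    (k : ℝ) ≤ j := by
  have hcount : ((k - 1 : ℕ) : ℝ) ≤ j / π + 1 := hj.2.2 ▸ ncard_besselZerosLT_le hν hj.1.le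
  rw [Nat.cast_pred (by lia), sub_le_iff_le_add, ← sub_le_iff_le_add, ← sub_le_iff_le_add,
    le_div_iff₀ pi_pos] at hcount
  have hk' : (3 : ℝ) ≤ k := mod_cast hk
  calc (k : ℝ) ≤ (k - 1 - 1) * 3 := by linarith
    _ ≤ (k - 1 - 1) * π := by gcongr; exacts [by linarith, pi_gt_three.le]
    _ ≤ j := hcount

lemma exists_abs_kthZero_sub_mcMahonPoint_le (N : ℝ) :
    ∃ K C : ℝ, 3 ≤ K ∧ 0 < C ∧ ∀ ν, 0 ≤ ν → ν ≤ N → ∀ k : ℕ, K ≤ k → ∀ j, IsKthZero ν k j →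
      |j - mcMahonPoint ν k| ≤ C / k := by
  obtain ⟨C, hC, hloc⟩ := exists_abs_zero_sub_mcMahonPoint_le N
  obtain ⟨X, hX, hnum⟩ := exists_zerosNumberedByMcMahonPoints N
  refine ⟨X + 2 * C + 3, C, by linarith, hC, fun ν hν hνN k hk j hj ↦ ?_⟩
  have hk₃ : 3 ≤ k := by exact_mod_cast (by linarith : (3 : ℝ) ≤ k)
  have hkj := le_of_isKthZero hν hk₃ hj
  obtain ⟨m, hm⟩ := hloc ν hν hνN j (by linarith) hj.2.1
  have hm_le : |j - mcMahonPoint ν m| ≤ C / k := hm.trans (by gcongr)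
  have hm_half : C / k ≤ 1 / 2 := by rw [div_le_iff₀ (by positivity)]; linarith
  have hcount := hnum ν hν hνN j (by linarith) hj.2.1 m (hm_le.trans hm_half)
  have hmk : m = k := by
    rw [show (besselZerosLT ν j).ncard = k - 1 from hj.2.2] at hcount
    omega
  exact hmk ▸ hm_le

lemma div_le_mul_div_add {C N k : ℝ} (hC : 0 ≤ C) (hν : 0 ≤ ν) (hνN : ν ≤ N) (hk : 1 ≤ k) :
    C / k ≤ C * (N + 1) / (ν + k) := by
  rw [div_le_div_iff₀ (by linarith) (by linarith), mul_assoc]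
  have : ν + k ≤ (N + 1) * k := by nlinarith
  gcongr

end Minkowski

/-- approximation `j_{ν,k} = F(ν, k - 1/4) + O(1/(ν+k))` for bounded
`0 ≤ ν ≤ N` and large `k`. -/
theorem zero_minkowski_approx_small_nu (N : ℝ) (hN : 0 < N) :
    ∃ K C : ℝ, 0 < K ∧ 0 < C ∧ ∀ ν : ℝ, 0 ≤ ν → ν ≤ N → ∀ k : ℕ, K ≤ (k : ℝ) →
      ∀ j : ℝ, IsKthZero ν k j →
      ∀ xstar : ℝ, ν ≤ xstar → xstar * gfun (ν / xstar) = (k : ℝ) - 1 / 4 →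
      |j - xstar| ≤ C / (ν + (k : ℝ)) := by
  obtain ⟨K, C, hK, hC, hzero⟩ := exists_abs_kthZero_sub_mcMahonPoint_le N
  refine ⟨K, (C + 6 * N ^ 2) * (N + 1), by linarith, by positivity, ?_⟩
  intro ν hν hνN k hk j hj xstar hνx hx
  have hk₁ : (1 : ℝ) ≤ k := by linarith
  have hxstar := abs_sub_mcMahonPoint_le_of_mul_gfun_eq hν hνN (mod_cast hk₁) hνx hx
  calc |j - xstar| ≤ |j - mcMahonPoint ν k| + |xstar - mcMahonPoint ν k| := by
        rw [abs_sub_comm xstar]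
        exact abs_sub_le _ _ _
    _ ≤ C / k + 6 * N ^ 2 / k := add_le_add (hzero ν hν hνN k hk j hj) hxstar
    _ = (C + 6 * N ^ 2) / k := (add_div _ _ _).symm
    _ ≤ (C + 6 * N ^ 2) * (N + 1) / (ν + k) := div_le_mul_div_add (by positivity) hν hνN hk₁
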